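/- Let h, d, m ∈ ℕ with d ≥ 2 and m ≥ 2, and let G := G_{h,d,m}. If P and Q are paths in G each having one endvertex in S(G) and one endvertex in T(G), then either one of P, Q contains the root R(G), or d_G(V(P), V(Q)) ≤ 2. -/

import Mathlib

open SimpleGraph

namespace CGT

/-- Distance between two vertex sets, as an extended natural number. -/
noncomputable def sDist {V : Type*} (G : SimpleGraph V) (U U' : Set V) : ℕ∞ :=
  ⨅ (u : U) (v : U'), G.edist u.1 v.1

/-- The ball of radius `r` around a vertex set `U`. -/
def gBall {V : Type*} (G : SimpleGraph V) (U : Set V) (r : ℕ) : Set V :=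
  {v | ∃ u ∈ U, G.edist u v ≤ (r : ℕ∞)}

/-- A set of vertices is connected if the induced subgraph is connected. -/
def SetConn {V : Type*} (G : SimpleGraph V) (U : Set V) : Prop :=
  (G.induce U).Connected

/-- The vertex set of a walk. -/
def walkSupp {V : Type*} {G : SimpleGraph V} {a b : V} (p : G.Walk a b) : Set V :=
  {v | v ∈ p.support}

/-- `X` separates `Y` and `Z` in `G`: every path with one end in `Y` and one in `Z`
contains a vertex of `X`. -/
def Separates {V : Type*} (G : SimpleGraph V) (X Y Z : Set V) : Prop :=
  ∀ ⦃y z : V⦄, y ∈ Y → z ∈ Z → ∀ p : G.Walk y z, p.IsPath → ∃ x ∈ X, x ∈ p.support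

/-- `f` is an `(M,A)`-quasi-isometry from `G` to `H`.  The two-sided distance bound
`M⁻¹ d_G(u,v) - A ≤ d_H(f u, f v) ≤ M d_G(u,v) + A` is stated multiplied out over `ℕ∞`. -/
structure IsQI {V V' : Type*} (M A : ℕ) (G : SimpleGraph V) (H : SimpleGraph V')
    (f : V → V') : Prop where
  upper : ∀ u v : V, H.edist (f u) (f v) ≤ (M : ℕ∞) * G.edist u v + (A : ℕ∞)
  lower : ∀ u v : V, G.edist u v ≤ (M : ℕ∞) * H.edist (f u) (f v) + (M : ℕ∞) * (A : ℕ∞)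
  dense : ∀ w : V', ∃ v : V, H.edist w (f v) ≤ (A : ℕ∞)

/-- `G` is `(M,A)`-quasi-isometric to `H`. -/
def QIsometric {V V' : Type*} (M A : ℕ) (G : SimpleGraph V) (H : SimpleGraph V') : Prop :=
  ∃ f : V → V', IsQI M A G H f

/-- `X` is a minor of `G`. -/
def HasMinor {V W : Type*} (G : SimpleGraph V) (X : SimpleGraph W) : Prop :=
  ∃ U : W → Set V,
    (∀ x, (U x).Nonempty) ∧ (∀ x, SetConn G (U x)) ∧
    (∀ ⦃x y⦄, x ≠ y → Disjoint (U x) (U y)) ∧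
    ∀ ⦃x y⦄, X.Adj x y → ∃ u ∈ U x, ∃ v ∈ U y, G.Adj u v

/-- The `(a × b)`-grid graph. -/
def gridGraph (a b : ℕ) : SimpleGraph (Fin a × Fin b) :=
  SimpleGraph.fromRel (fun u v =>
    (u.1 = v.1 ∧ u.2.1 + 1 = v.2.1) ∨ (u.2 = v.2 ∧ u.1.1 + 1 = v.1.1))

/-- A `K`-fat model of `X` in `G`: disjoint connected branch sets joined by internally
disjoint branch paths, all pairwise at distance at least `K` except for a branch path and
the branch sets of its endpoints. -/
structure FatModel {V W : Type*} (G : SimpleGraph V) (X : SimpleGraph W) (K : ℕ) where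
  branch : W → Set V
  branch_nonempty : ∀ x, (branch x).Nonempty
  branch_connected : ∀ x, SetConn G (branch x)
  branch_disjoint : ∀ ⦃x y⦄, x ≠ y → Disjoint (branch x) (branch y)
  pathEnd : ∀ ⦃x y⦄, X.Adj x y → V
  path : ∀ ⦃x y⦄ (e : X.Adj x y), G.Walk (pathEnd e) (pathEnd e.symm)
  path_isPath : ∀ ⦃x y⦄ (e : X.Adj x y), (path e).IsPath
  path_symm : ∀ ⦃x y⦄ (e : X.Adj x y), path e.symm = (path e).reverse
  pathEnd_mem : ∀ ⦃x y⦄ (e : X.Adj x y), pathEnd e ∈ branch x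
  path_meets : ∀ ⦃x y⦄ (e : X.Adj x y) (z : W) (v : V), v ∈ (path e).support → v ∈ branch z →
    (z = x ∧ v = pathEnd e) ∨ (z = y ∧ v = pathEnd e.symm)
  path_int_disjoint : ∀ ⦃x y x' y'⦄ (e : X.Adj x y) (e' : X.Adj x' y'), s(x, y) ≠ s(x', y') →
    ∀ v, v ∈ (path e).support → v ∈ (path e').support → v = pathEnd e' ∨ v = pathEnd e'.symm
  fat_branch : ∀ ⦃x y⦄, x ≠ y → (K : ℕ∞) ≤ sDist G (branch x) (branch y)
  fat_path_branch : ∀ ⦃x y⦄ (e : X.Adj x y) (z : W), z ≠ x → z ≠ y →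
    (K : ℕ∞) ≤ sDist G (walkSupp (path e)) (branch z)
  fat_paths : ∀ ⦃x y x' y'⦄ (e : X.Adj x y) (e' : X.Adj x' y'), s(x, y) ≠ s(x', y') →
    (K : ℕ∞) ≤ sDist G (walkSupp (path e)) (walkSupp (path e'))

/-- `X` is a `K`-fat minor of `G`. -/
def IsFatMinor {V W : Type*} (G : SimpleGraph V) (X : SimpleGraph W) (K : ℕ) : Prop :=
  Nonempty (FatModel G X K)

/-- `W` is a `K`-fat `n`-path-connected set in `G`. -/
def FatPathConn {V : Type*} (G : SimpleGraph V) (K n : ℕ) (W : Set V) : Prop :=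
  (∃ S : Finset V, ↑S ⊆ W ∧ 2 * n ≤ S.card) ∧
  (∀ ⦃u v : V⦄, u ∈ W → v ∈ W → u ≠ v → (K : ℕ∞) ≤ G.edist u v) ∧
  ∀ l : ℕ, l ≤ n → ∀ A B : Finset V, ↑A ⊆ W → ↑B ⊆ W → A.card = l → B.card = l →
    ∃ (a b : Fin l → V) (P : ∀ i : Fin l, G.Walk (a i) (b i)),
      (∀ i, (P i).IsPath) ∧ (∀ i, a i ∈ A ∧ b i ∈ B) ∧
      ∀ i j, i ≠ j → (K : ℕ∞) ≤ sDist G (walkSupp (P i)) (walkSupp (P j))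

end CGT

namespace Ghdm

/-- Raw vertex codes for the graphs `G_{h,d,m}`:
`path k` is the `k`-th vertex of the base path; `tree j i p` is the vertex at position `p`
of the `i`-th binary tree at level `j` (the root being position `[]`); and
`spine j i k t e s` is the `s`-th internal vertex of the spine from the `k`-th leaf of that
tree to the `e`-th element of the `t`-th local gluing set at level `j-1`. -/
inductive Raw : Type where
  | path (k : ℕ)
  | tree (j i : ℕ) (p : List Bool)
  | spine (j i k t e s : ℕ)
deriving DecidableEq

/-- `N = 2^{h+1} - 1`, the number of copies of `G_{h,d,m-1}` glued inside `G_{h,d,m}`. -/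
def NN (h : ℕ) : ℕ := 2 ^ (h + 1) - 1

/-- Canonical representative of a raw vertex code: all tree roots are identified with the
single root `tree m 1 []`, and the leftmost leaf of tree `i > 1` is identified with the
rightmost leaf of tree `i - 1` (consecutive copies are glued along these leaves). -/
def canon (h m : ℕ) : Raw → Raw
  | .tree j i p =>
    if p = [] then .tree m 1 []
    else if p = List.replicate h false ∧ 1 < i then .tree j (i - 1) (List.replicate h true)
    else .tree j i p
  | x => x

/-- The `q`-bit binary representation of `i` (most significant bit first);
`false` means "left". -/
def natToBits (q i : ℕ) : List Bool := (List.range q).map fun a => Nat.testBit i (q - 1 - a)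

/-- Position of the `k`-th leaf (1-based, from the left) in a binary tree of height `h`. -/
def leafPos (h k : ℕ) : List Bool := natToBits h (k - 1)

/-- The `e`-th element of the `g`-th gluing set `V^{jv}_g` (at level `jv`):
its element `e = 1` is an anchor of the base path, and its element `e ≥ 2` is a shared
extreme leaf of the trees at level `e`. -/
def VsetElem (h d jv g e : ℕ) : Raw :=
  if e = 1 then .path ((g - 1) * NN h ^ (jv - 1) * (d + 1))
  else if (g - 1) * NN h ^ (jv - e) = 0 then .tree e 1 (List.replicate h false)
  else .tree e ((g - 1) * NN h ^ (jv - e)) (List.replicate h true)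

/-- Valid (canonical) vertex codes of `G_{h,d,m}`. -/
def Valid (h d m : ℕ) : Raw → Prop
  | .path k => k ≤ (d + 1) * NN h ^ (m - 1)
  | .tree j i p => 2 ≤ j ∧ j ≤ m ∧ 1 ≤ i ∧ i ≤ NN h ^ (m - j) ∧ p.length ≤ h ∧
      (p = [] → j = m ∧ i = 1) ∧ (p = List.replicate h false → p ≠ [] → i = 1)
  | .spine j i k t e s => 2 ≤ j ∧ j ≤ m ∧ 1 ≤ i ∧ i ≤ NN h ^ (m - j) ∧
      1 ≤ k ∧ k ≤ 2 ^ h ∧ (t = 2 * k - 2 ∨ t = 2 * k + 1) ∧ 1 ≤ t ∧ t ≤ 2 ^ (h + 1) ∧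
      1 ≤ e ∧ e ≤ j - 1 ∧ 1 ≤ s ∧ s ≤ d

/-- Generating adjacencies between raw vertex codes: consecutive base path vertices,
parent/child in the binary trees, consecutive spine vertices, a spine and the leaf it
starts at, a spine and the gluing-set vertex it ends at (the latter collapsed to a single
edge when `d = 0`). -/
inductive rawAdj (h d : ℕ) : Raw → Raw → Prop
  | base (k : ℕ) : rawAdj h d (.path k) (.path (k + 1))
  | child (j i : ℕ) (p : List Bool) (b : Bool) : p.length < h →
      rawAdj h d (.tree j i p) (.tree j i (p ++ [b]))
  | step (j i k t e s : ℕ) : rawAdj h d (.spine j i k t e s) (.spine j i k t e (s + 1))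
  | toLeaf (j i k t e : ℕ) : rawAdj h d (.tree j i (leafPos h k)) (.spine j i k t e 1)
  | toV (j i k t e : ℕ) :
      rawAdj h d (.spine j i k t e d) (VsetElem h d (j - 1) ((i - 1) * NN h + t) e)
  | short (j i k t e : ℕ) : d = 0 → 1 ≤ k → k ≤ 2 ^ h → (t = 2 * k - 2 ∨ t = 2 * k + 1) →
      1 ≤ t → t ≤ 2 ^ (h + 1) → 1 ≤ e → e ≤ j - 1 →
      rawAdj h d (.tree j i (leafPos h k)) (VsetElem h d (j - 1) ((i - 1) * NN h + t) e)

/-- Adjacency of canonical representatives. -/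
def rel (h d m : ℕ) (x y : Raw) : Prop :=
  ∃ a b, rawAdj h d a b ∧ x = canon h m a ∧ y = canon h m b

/-- The vertex set of `G_{h,d,m}`. -/
def Verts (h d m : ℕ) : Set Raw := {x | Valid h d m x}

/-- The graph `G_{h,d,m}`. -/
def G (h d m : ℕ) : SimpleGraph (Verts h d m) :=
  (SimpleGraph.fromRel (rel h d m)).induce (Verts h d m)

/-- Lift a set of raw codes to a set of vertices of `G_{h,d,m}`. -/
def lift {h d m : ℕ} (S : Set Raw) : Set (Verts h d m) := Subtype.val ⁻¹' S

/-- The root `R(G_{h,d,m})`. -/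
def RootR (m : ℕ) : Raw := .tree m 1 []

/-- The gluing set `V^{jv}_g` of `G_{h,d,m}`, as a set of raw codes. -/
def VsetRaw (h d m jv g : ℕ) : Set Raw :=
  {x | ∃ e, 1 ≤ e ∧ e ≤ jv ∧ x = canon h m (VsetElem h d jv g e)}

/-- The set `S(G_{h,d,m})`. -/
def SsetR (h d m : ℕ) : Set Raw :=
  VsetRaw h d m (m - 1) 1 ∪ {canon h m (.tree m 1 (leafPos h 1))}

/-- The set `T(G_{h,d,m})`. -/
def TsetR (h d m : ℕ) : Set Raw :=
  VsetRaw h d m (m - 1) (2 ^ (h + 1)) ∪ {canon h m (.tree m 1 (leafPos h (2 ^ h)))}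

/-- For a vertex of the top binary tree at position `p`, the (1-based) index of the
leftmost leaf of the top tree below it. -/
def kOf (h : ℕ) (p : List Bool) : ℕ :=
  (p.foldl (fun a b => 2 * a + if b then 1 else 0) 0) * 2 ^ (h - p.length) + 1

/-- `S(Δ(x))` for the vertex `x` of the top binary tree `B(G_{h,d,m})` at position `p`. -/
def SDeltaR (h d m : ℕ) (p : List Bool) : Set Raw :=
  VsetRaw h d m (m - 1) (2 * kOf h p - 1) ∪ {canon h m (.tree m 1 (leafPos h (kOf h p)))}

/-- The leaf of `B(G_{h,d,m})` immediately to the left of the leftmost leaf below the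
top-tree vertex at position `p`; it is the unique leaf joined by spines to `S(Δ(x))`. -/
def leafLeftR (h m : ℕ) (p : List Bool) : Raw :=
  canon h m (.tree m 1 (leafPos h (kOf h p - 1)))

end Ghdm

namespace GA

def Cn {α : Type} (R : α → α → Prop) (X : Set α) (u v : α) : Prop :=
  u ∈ X ∧ Relation.ReflTransGen (fun a b => R a b ∧ a ∈ X ∧ b ∈ X) u v

theorem Cn.refl {α : Type} {R : α → α → Prop} {X : Set α} {u : α} (h : u ∈ X) : Cn R X u u :=
  ⟨h, Relation.ReflTransGen.refl⟩

theorem Cn.right {α : Type} {R : α → α → Prop} {X : Set α} {u v : α} (h : Cn R X u v) : v ∈ X := by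
  obtain ⟨h1, h2⟩ := h
  induction h2 with
  | refl => exact h1
  | tail _ h _ => exact h.2.2

theorem Cn.tail {α : Type} {R : α → α → Prop} {X : Set α} {u v w : α} (h : Cn R X u v)
    (hr : R v w) (hw : w ∈ X) : Cn R X u w :=
  ⟨h.1, h.2.tail ⟨hr, h.right, hw⟩⟩

theorem Cn.trans {α : Type} {R : α → α → Prop} {X : Set α} {u v w : α} (h : Cn R X u v)
    (h' : Cn R X v w) : Cn R X u w :=
  ⟨h.1, h.2.trans h'.2⟩

theorem Cn.symm {α : Type} {R : α → α → Prop} (hR : ∀ a b, R a b → R b a) {X : Set α} {u v : α}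
    (h : Cn R X u v) : Cn R X v u := by
  refine ⟨h.right, ?_⟩
  obtain ⟨_, h2⟩ := h
  induction h2 with
  | refl => exact Relation.ReflTransGen.refl
  | tail _ h ih => exact Relation.ReflTransGen.head ⟨hR _ _ h.1, h.2.2, h.2.1⟩ ih

theorem Cn.closed {α : Type} {R : α → α → Prop} {X : Set α} {u v : α} (h : Cn R X u v)
    (Z : α → Prop) (h0 : Z u)
    (hs : ∀ a b, Z a → R a b → a ∈ X → b ∈ X → Z b) : Z v := by
  obtain ⟨_, h2⟩ := h
  induction h2 with
  | refl => exact h0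
  | tail _ h ih => exact hs _ _ ih h.1 h.2.1 h.2.2

theorem Cn.mono {α : Type} {R R' : α → α → Prop} {X X' : Set α} {u v : α} (h : Cn R X u v)
    (hX : X ⊆ X') (hR : ∀ a b, a ∈ X → b ∈ X → R a b → R' a b) : Cn R' X' u v := by
  refine ⟨hX h.1, ?_⟩
  obtain ⟨_, h2⟩ := h
  induction h2 with
  | refl => exact Relation.ReflTransGen.refl
  | tail _ hab ih => exact ih.tail ⟨hR _ _ hab.2.1 hab.2.2 hab.1, hX hab.2.1, hX hab.2.2⟩

theorem Cn.trunc {α : Type} {R : α → α → Prop} {X : Set α} {u v x : α} (h : Cn R X u v)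
    (hu : u ≠ x) :
    (v ≠ x ∧ Cn R (X \ {x}) u v) ∨ ∃ w, R w x ∧ Cn R (X \ {x}) u w := by
  by_contra hcon
  push Not at hcon
  have := h.closed (fun w => w ≠ x ∧ Cn R (X \ {x}) u w) ⟨hu, Cn.refl ⟨h.1, hu⟩⟩ (by
    intro a b ha hab haX hbX
    have hb : b ≠ x := by
      rintro rfl
      exact hcon.2 _ hab ha.2
    exact ⟨hb, ha.2.tail hab ⟨hbX, hb⟩⟩)
  exact hcon.1 this.1 this.2

structure Split {α : Type} (R Ry Rz Rm : α → α → Prop) (x y z a0 b0 : α)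
    (C1 C2 Vy Vz Vm S1 S2 : Set α) : Prop where
  edge : ∀ a b, R a b → a ≠ x → b ≠ x → Ry a b ∨ Rz a b ∨ Rm a b ∨
    (a ∈ S1 ∧ (b ∈ S1 ∨ b = a0 ∨ b ∈ C2)) ∨ (b ∈ S1 ∧ (a ∈ S1 ∨ a = a0 ∨ a ∈ C2)) ∨
    (a ∈ S2 ∧ (b ∈ S2 ∨ b = b0 ∨ b ∈ C1)) ∨ (b ∈ S2 ∧ (a ∈ S2 ∨ a = b0 ∨ a ∈ C1))
  xedge : ∀ v, R v x → v = y ∨ v = z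
  symm : ∀ a b, R a b → R b a
  ysymm : ∀ a b, Ry a b → Ry b a
  zsymm : ∀ a b, Rz a b → Rz b a
  msymm : ∀ a b, Rm a b → Rm b a
  hy : ∀ a b, Ry a b → a ∈ Vy ∧ b ∈ Vy
  hz : ∀ a b, Rz a b → a ∈ Vz ∧ b ∈ Vz
  hm : ∀ a b, Rm a b → a ∈ Vm ∧ b ∈ Vm
  yz : ∀ a, a ∈ Vy → a ∈ Vz → False
  ym : ∀ a, a ∈ Vy → a ∈ Vm → a ∈ C1
  zm : ∀ a, a ∈ Vz → a ∈ Vm → a ∈ C2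
  s1 : ∀ a, a ∈ S1 → a ∉ Vy ∧ a ∉ Vz ∧ a ∉ Vm ∧ a ∉ S2
  s2 : ∀ a, a ∈ S2 → a ∉ Vy ∧ a ∉ Vz ∧ a ∉ Vm ∧ a ∉ S1
  c1 : ∀ a, a ∈ C1 → a ∈ Vy ∧ a ∈ Vm
  c2 : ∀ a, a ∈ C2 → a ∈ Vz ∧ a ∈ Vm
  ha0 : a0 ∈ Vy ∧ a0 ∉ Vm
  hb0 : b0 ∈ Vz ∧ b0 ∉ Vm
  yVy : y ∈ Vy
  zVz : z ∈ Vz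
  xy : x ∉ Vy
  xz : x ∉ Vz

theorem Split.mirror {α : Type} {R Ry Rz Rm : α → α → Prop} {x y z a0 b0 : α}
    {C1 C2 Vy Vz Vm S1 S2 : Set α} (H : Split R Ry Rz Rm x y z a0 b0 C1 C2 Vy Vz Vm S1 S2) :
    Split R Rz Ry Rm x z y b0 a0 C2 C1 Vz Vy Vm S2 S1 where
  edge := fun a b h1 h2 h3 => by
    have := H.edge a b h1 h2 h3
    tauto
  xedge := fun v h => (H.xedge v h).symm
  symm := H.symm
  ysymm := H.zsymm
  zsymm := H.ysymm
  msymm := H.msymm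
  hy := H.hz
  hz := H.hy
  hm := H.hm
  yz := fun a h1 h2 => H.yz a h2 h1
  ym := H.zm
  zm := H.ym
  s1 := fun a h => by have := H.s2 a h; tauto
  s2 := fun a h => by have := H.s1 a h; tauto
  c1 := H.c2
  c2 := H.c1
  ha0 := H.hb0
  hb0 := H.ha0
  yVy := H.zVz
  zVz := H.yVy
  xy := H.xz
  xz := H.xy

theorem Split.memVy {α : Type} {R Ry Rz Rm : α → α → Prop} {x y z a0 b0 : α}
    {C1 C2 Vy Vz Vm S1 S2 : Set α} (H : Split R Ry Rz Rm x y z a0 b0 C1 C2 Vy Vz Vm S1 S2)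
    {X : Set α} {s t : α} (hs : s ∈ Vy) (h : Cn Ry X s t) : t ∈ Vy :=
  h.closed (fun w => w ∈ Vy) hs (fun a b _ hab _ _ => (H.hy a b hab).2)

theorem Split.exit {α : Type} {R Ry Rz Rm : α → α → Prop} {x y z a0 b0 : α}
    {C1 C2 Vy Vz Vm S1 S2 : Set α} (H : Split R Ry Rz Rm x y z a0 b0 C1 C2 Vy Vz Vm S1 S2)
    {X : Set α} (hx : x ∉ X) {s t : α} (hs : s ∈ Vy) (h : Cn R X s t) :
    (∃ u, (u = a0 ∨ u ∈ C1) ∧ Cn Ry X s u) ∨ Cn Ry X s t := by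
  by_contra hcon
  push Not at hcon
  obtain ⟨h1, h2⟩ := hcon
  refine h2 (h.closed (fun w => Cn Ry X s w) (Cn.refl h.1) ?_)
  intro a b ha hab haX hbX
  have haV := H.memVy hs ha
  have hne : a ≠ a0 := fun e => h1 a (Or.inl e) ha
  have hnc : a ∉ C1 := fun e => h1 a (Or.inr e) ha
  have e1 := H.edge a b hab (fun e => hx (e ▸ haX)) (fun e => hx (e ▸ hbX))
  have e2 := H.yz a haV
  have e3 := H.ym a haV
  have e4 := H.s1 a
  have e5 := H.s2 a
  have e6 := H.c2 a
  have e7 := H.hz a b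
  have e8 := H.hm a b
  have e9 := H.hb0
  rcases e1 with e | e | e | e | e | e | e
  · exact ha.tail e hbX
  all_goals exfalso
  · grind
  · grind
  · grind
  · grind
  · grind
  · rcases e.2 with h | h | h
    · grind
    · subst h; grind
    · grind

theorem Split.cross1 {α : Type} {R Ry Rz Rm : α → α → Prop} {x y z a0 b0 : α}
    {C1 C2 Vy Vz Vm S1 S2 : Set α} (H : Split R Ry Rz Rm x y z a0 b0 C1 C2 Vy Vz Vm S1 S2)
    {X : Set α} (hx : x ∉ X) {s t : α} (hs : s ∈ Vy) (ht : t ∈ Vz) (h : Cn R X s t)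
    (n1 : ∀ c ∈ C1, ¬ Cn Ry X s c) (n2 : ∀ c ∈ C2, ¬ Cn Rz X c t) :
    ∃ c1 ∈ C1, ∃ c2 ∈ C2, Cn Rm X c1 c2 := by
  by_contra hcon
  push Not at hcon
  have hsa : Cn Ry X s a0 := by
    rcases H.exit hx hs h with ⟨u, rfl | hu, h'⟩ | h'
    · exact h'
    · exact absurd h' (n1 u hu)
    · exact absurd ht (fun k => H.yz t (H.memVy hs h') k)
  have hbt : Cn Rz X b0 t := by
    rcases H.mirror.exit hx ht (h.symm H.symm) with ⟨u, rfl | hu, h'⟩ | h'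
    · exact h'.symm H.zsymm
    · exact absurd (h'.symm H.zsymm) (n2 u hu)
    · exact absurd (H.mirror.memVy ht h') (fun k => H.yz s hs k)
  have hZ := h.closed (fun w => Cn Ry X s w ∨ w ∈ S1 ∨ (∃ c ∈ C2, Cn Rz X c w) ∨
      (w ∈ Vm ∧ ∃ c ∈ C2, Cn Rm X c w)) (Or.inl (Cn.refl h.1)) (by
    intro a b ha hab haX hbX
    have e1 := H.edge a b hab (fun e => hx (e ▸ haX)) (fun e => hx (e ▸ hbX))
    have e4 := H.s1 a
    have e5 := H.s2 a
    have e7 := H.hz a b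
    have e8 := H.hm a b
    have e10 := H.hy a b
    have e6 := H.c2 a
    have e11 := H.c1 a
    have ea := H.ha0
    have eb := H.hb0
    have e2 := H.yz a
    rcases ha with ha | ha | ⟨c, hc, ha⟩ | ⟨haV, c, hc, ha⟩
    · have haV := H.memVy hs ha
      have hnc : a ∉ C1 := fun e => n1 a e ha
      have e3 := H.ym a haV
      rcases e1 with e | e | e | e | e | e | e
      · exact Or.inl (ha.tail e hbX)
      · grind
      · grind
      · grind
      · grind
      · grind
      · rcases e.2 with h | h | h
        · grind
        · subst h; grind
        · grind
    · rcases e1 with e | e | e | e | e | e | e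
      · grind
      · grind
      · grind
      · rcases e.2 with h | h | h
        · grind
        · subst h; grind
        · exact Or.inr (Or.inr (Or.inl ⟨b, h, Cn.refl hbX⟩))
      · grind
      · grind
      · rcases e.2 with h | h | h
        · grind
        · subst h; grind
        · grind
    · have haV := H.mirror.memVy (H.c2 c hc).1 ha
      have e3 := H.zm a haV
      have hnb : a ≠ b0 := by
        rintro rfl
        exact n2 c hc (ha.trans hbt)
      rcases e1 with e | e | e | e | e | e | e
      · grind
      · exact Or.inr (Or.inr (Or.inl ⟨c, hc, ha.tail e hbX⟩))
      · exact Or.inr (Or.inr (Or.inr ⟨(e8 e).2, a, e3 (e8 e).1, (Cn.refl haX).tail e hbX⟩))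
      · grind
      · grind
      · grind
      · grind
    · have hc1 : a ∉ C1 := fun k => hcon a k c hc (ha.symm H.msymm)
      have e3 := H.zm a
      have e33 := H.ym a
      have na : a ≠ a0 := by rintro rfl; grind
      have nb : a ≠ b0 := by rintro rfl; grind
      rcases e1 with e | e | e | e | e | e | e
      · grind
      · exact Or.inr (Or.inr (Or.inl ⟨a, e3 (e7 e).1 haV, (Cn.refl haX).tail e hbX⟩))
      · exact Or.inr (Or.inr (Or.inr ⟨(e8 e).2, c, hc, ha.tail e hbX⟩))
      · grind
      · grind
      · grind
      · grind)
  rcases hZ with ha | ha | ⟨c, hc, ha⟩ | ⟨haV, c, hc, ha⟩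
  · exact H.yz t (H.memVy hs ha) ht
  · exact (H.s1 t ha).2.1 ht
  · exact n2 c hc ha
  · exact n2 t (H.zm t ht haV) (Cn.refl h.right)

theorem Split.cross2 {α : Type} {R Ry Rz Rm : α → α → Prop} {x y z a0 b0 : α}
    {C1 C2 Vy Vz Vm S1 S2 : Set α} (H : Split R Ry Rz Rm x y z a0 b0 C1 C2 Vy Vz Vm S1 S2)
    {X : Set α} (hx : x ∉ X) {s t : α} (hs : s ∈ Vy) (ht : t ∈ Vz) (h : Cn R X s t)
    (n1 : a0 ∉ X) (n2 : b0 ∉ X) :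
    ∃ c1 ∈ C1, ∃ c2 ∈ C2, Cn Rm X c1 c2 := by
  by_contra hcon
  push Not at hcon
  have hZ := h.closed (fun w => w ∈ Vy ∨ w ∈ S2 ∨
      (w ∈ Vm ∧ ∃ c ∈ C1, Cn Rm X c w)) (Or.inl hs) (by
    intro a b ha hab haX hbX
    have e1 := H.edge a b hab (fun e => hx (e ▸ haX)) (fun e => hx (e ▸ hbX))
    have na : a ≠ a0 := fun e => n1 (e ▸ haX)
    have nb : a ≠ b0 := fun e => n2 (e ▸ haX)
    have na' : b ≠ a0 := fun e => n1 (e ▸ hbX)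
    have nb' : b ≠ b0 := fun e => n2 (e ▸ hbX)
    have e4 := H.s1 a
    have e5 := H.s2 a
    have e7 := H.hz a b
    have e8 := H.hm a b
    have e10 := H.hy a b
    have e6 := H.c2 a
    have e11 := H.c1 a
    have e12 := H.c1 b
    have e2 := H.yz a
    rcases ha with ha | ha | ⟨haV, c, hc, ha⟩
    · have e3 := H.ym a ha
      rcases e1 with e | e | e | e | e | e | e
      · grind
      · grind
      · exact Or.inr (Or.inr ⟨(e8 e).2, a, e3 (e8 e).1, (Cn.refl haX).tail e hbX⟩)
      all_goals grind
    · grind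
    · have hc2 : a ∉ C2 := fun k => hcon c hc a k ha
      have e3 := H.zm a
      rcases e1 with e | e | e | e | e | e | e
      · grind
      · grind
      · exact Or.inr (Or.inr ⟨(e8 e).2, c, hc, ha.tail e hbX⟩)
      all_goals grind)
  rcases hZ with ha | ha | ⟨haV, c, hc, ha⟩
  · exact H.yz t ha ht
  · exact (H.s2 t ha).2.1 ht
  · exact hcon c hc t (H.zm t ht haV) ha

def Half {α : Type} (far : Set α → Set α → Prop) (R : α → α → Prop) (x ls lt : α)
    (A B : Set α) : Prop :=
  (∀ X Y s t s' t', far X Y → (s = ls ∨ s ∈ A) → (s' = ls ∨ s' ∈ A) →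
    (t = lt ∨ t ∈ B ∨ t = x) → (t' = lt ∨ t' ∈ B ∨ t' = x) →
    Cn R X s t → Cn R Y s' t' → s = ls ∨ s' = ls) ∧
  (∀ X Y t s' t', far X Y → (t = lt ∨ t ∈ B) → (s' = ls ∨ s' ∈ A) →
    (t' = lt ∨ t' ∈ B ∨ t' = x) → Cn R X ls t → Cn R Y s' t' → x ∈ X)

def Full {α : Type} (far : Set α → Set α → Prop) (R : α → α → Prop) (x ls lt : α)
    (A B : Set α) : Prop :=
  Half far R x ls lt A B ∧ Half far R x lt ls B A

theorem half_step {α : Type} {far : Set α → Set α → Prop} {R Ry Rz Rm : α → α → Prop}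
    {x y z a0 b0 ls lt : α} {C1 C2 Vy Vz Vm S1 S2 A B : Set α}
    (H : Split R Ry Rz Rm x y z a0 b0 C1 C2 Vy Vz Vm S1 S2)
    (fsymm : ∀ X Y, far X Y → far Y X)
    (fmono : ∀ X Y Y', far X Y → Y' ⊆ Y → far X Y')
    (fdisj : ∀ X Y a, far X Y → a ∈ X → a ∈ Y → False)
    (fyz : ∀ X Y, far X Y → y ∈ X → z ∈ Y → False)
    (hm : ∀ X Y, far X Y → (∃ c1 ∈ C1, ∃ c2 ∈ C2, Cn Rm X c1 c2) →
      (∃ c1 ∈ C1, ∃ c2 ∈ C2, Cn Rm Y c1 c2) → False)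
    (hls : ls ∈ Vy) (hlt : lt ∈ Vz) (hA : A ⊆ Vy) (hB : B ⊆ Vz)
    (Fy : Full far Ry y ls a0 A C1) (Fz : Full far Rz z b0 lt C2 B) :
    Half far R x ls lt A B := by
  have hex : ∀ X s t, (s = ls ∨ s ∈ A) → (t = lt ∨ t ∈ B ∨ t = x) → Cn R X s t →
      ∃ u, (u = a0 ∨ u ∈ C1 ∨ u = y) ∧ Cn Ry (X \ {x}) s u := by
    intro X s t hs ht h
    have hsV : s ∈ Vy := by
      rcases hs with rfl | hs
      · exact hls
      · exact hA hs
    have hx : x ∉ X \ {x} := fun k => k.2 rfl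
    have key : ∀ w, (w = y ∨ w ∈ Vz) → Cn R (X \ {x}) s w →
        ∃ u, (u = a0 ∨ u ∈ C1 ∨ u = y) ∧ Cn Ry (X \ {x}) s u := by
      intro w hw hc
      rcases H.exit hx hsV hc with ⟨u, hu, h'⟩ | h'
      · exact ⟨u, by grind, h'⟩
      · rcases hw with rfl | hw
        · exact ⟨_, Or.inr (Or.inr rfl), h'⟩
        · exact absurd hw (fun k => H.yz w (H.memVy hsV h') k)
    rcases h.trunc (x := x) (fun e => H.xy (e ▸ hsV)) with ⟨h1, h2⟩ | ⟨w, h1, h2⟩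
    · refine key t (Or.inr ?_) h2
      rcases ht with rfl | ht | ht
      · exact hlt
      · exact hB ht
      · exact absurd ht h1
    · refine key w ?_ h2
      rcases H.xedge w h1 with rfl | rfl
      · exact Or.inl rfl
      · exact Or.inr H.zVz
  have fsub : ∀ X Y, far X Y → far X (Y \ {x}) := fun X Y h => fmono _ _ _ h Set.sdiff_subset
  constructor
  · intro X Y s t s' t' hf hs hs' ht ht' h h'
    obtain ⟨u, hu, hc⟩ := hex X s t hs ht h
    obtain ⟨u', hu', hc'⟩ := hex Y s' t' hs' ht' h'
    exact Fy.1.1 _ _ s u s' u' (fsymm _ _ (fsub _ _ (fsymm _ _ (fsub _ _ hf)))) hs hs' hu hu' hc hc'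
  · intro X Y t s' t' hf ht hs' ht' h h'
    by_contra hxX
    have hXx : X \ {x} = X := by simp [hxX]
    have hsV : s' ∈ Vy := by
      rcases hs' with rfl | hs
      · exact hls
      · exact hA hs
    have htV : t ∈ Vz := by
      rcases ht with rfl | hs
      · exact hlt
      · exact hB hs
    have hxY : x ∉ Y \ {x} := fun k => k.2 rfl
    have hf' := fsub _ _ hf
    obtain ⟨uX, huX, hcX⟩ : ∃ u, (u = a0 ∨ u ∈ C1) ∧ Cn Ry X ls u := by
      rcases H.exit hxX hls h with h1 | h1
      · exact h1
      · exact absurd htV (fun k => H.yz t (H.memVy hls h1) k)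
    obtain ⟨uY0, huY0, hcY0⟩ := hex Y s' t' hs' ht' h'
    have hyX : y ∈ X := Fy.1.2 _ _ uX s' uY0 hf' huX hs' huY0 hcX hcY0
    have hyY : y ∉ Y \ {x} := fun k => fdisj _ _ y hf' hyX k
    obtain ⟨τ, hτ, hcτ⟩ : ∃ τ, (τ = lt ∨ τ ∈ B ∨ τ = z) ∧ Cn R (Y \ {x}) s' τ := by
      rcases h'.trunc (x := x) (fun e => H.xy (e ▸ hsV)) with ⟨h1, h2⟩ | ⟨w, h1, h2⟩
      · exact ⟨t', by grind, h2⟩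
      · rcases H.xedge w h1 with rfl | rfl
        · exact absurd h2.right hyY
        · exact ⟨_, by grind, h2⟩
    have hτV : τ ∈ Vz := by
      rcases hτ with rfl | hs | rfl
      · exact hlt
      · exact hB hs
      · exact H.zVz
    have hzY : z ∉ Y \ {x} := fun k => fyz _ _ hf' hyX k
    obtain ⟨vX, hvX, hdX⟩ : ∃ u, (u = b0 ∨ u ∈ C2) ∧ Cn Rz X u t := by
      rcases H.mirror.exit hxX htV (h.symm H.symm) with ⟨u, h1, h2⟩ | h1
      · exact ⟨u, h1, h2.symm H.zsymm⟩
      · exact absurd (H.mirror.memVy htV h1) (fun k => H.yz ls hls k)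
    have nYa : ¬ Cn Ry (Y \ {x}) s' a0 := fun k =>
      hyY (Fy.2.2 _ _ s' uX ls (fsymm _ _ hf') hs' huX (Or.inl rfl) (k.symm H.ysymm)
        (hcX.symm H.ysymm))
    have nYb : ¬ Cn Rz (Y \ {x}) b0 τ := fun k => by
      rcases hτ with h1 | h1 | h1
      · exact hzY (Fz.1.2 _ _ τ vX t (fsymm _ _ hf') (Or.inl h1) hvX (by grind) k hdX)
      · exact hzY (Fz.1.2 _ _ τ vX t (fsymm _ _ hf') (Or.inr h1) hvX (by grind) k hdX)
      · exact hzY (h1 ▸ k.right)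
    obtain ⟨uY, huY, hcY⟩ : ∃ u, u ∈ C1 ∧ Cn Ry (Y \ {x}) s' u := by
      rcases H.exit hxY hsV hcτ with ⟨u, rfl | h1, h2⟩ | h1
      · exact absurd h2 nYa
      · exact ⟨u, h1, h2⟩
      · exact absurd hτV (fun k => H.yz τ (H.memVy hsV h1) k)
    obtain ⟨vY, hvY, hdY⟩ : ∃ u, u ∈ C2 ∧ Cn Rz (Y \ {x}) u τ := by
      rcases H.mirror.exit hxY hτV (hcτ.symm H.symm) with ⟨u, rfl | h1, h2⟩ | h1
      · exact absurd (h2.symm H.zsymm) nYb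
      · exact ⟨u, h1, h2.symm H.zsymm⟩
      · exact absurd (H.mirror.memVy hτV h1) (fun k => H.yz s' hsV k)
    have a0C : a0 ∉ C1 := fun k => H.ha0.2 (H.c1 _ k).2
    have b0C : b0 ∉ C2 := fun k => H.hb0.2 (H.c2 _ k).2
    have pX : ∀ u, (u = a0 ∨ u ∈ C1) → Cn Ry X ls u → u = a0 := by
      intro u hu hc
      rcases Fy.2.1 _ _ u ls uY s' hf' hu (Or.inr huY) (Or.inl rfl) (by grind)
        (hc.symm H.ysymm) (hcY.symm H.ysymm) with h1 | h1
      · exact h1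
      · exact absurd (h1 ▸ huY) a0C
    have qX : ∀ u, (u = b0 ∨ u ∈ C2) → Cn Rz X u t → u = b0 := by
      intro u hu hc
      rcases Fz.1.1 _ _ u t vY τ hf' hu (Or.inr hvY) (by grind) hτ hc hdY with h1 | h1
      · exact h1
      · exact absurd (h1 ▸ hvY) b0C
    have haX : a0 ∈ X := by
      have := pX _ huX hcX
      exact this ▸ hcX.right
    have hbX : b0 ∈ X := by
      have := qX _ hvX hdX
      exact this ▸ hdX.1
    refine hm _ _ hf' ?_ ?_
    · refine H.cross1 hxX hls htV h ?_ ?_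
      · intro c hc k
        exact a0C (pX c (Or.inr hc) k ▸ hc)
      · intro c hc k
        exact b0C (qX c (Or.inr hc) k ▸ hc)
    · exact H.cross2 hxY hsV hτV hcτ (fun k => fdisj _ _ _ hf' haX k)
        (fun k => fdisj _ _ _ hf' hbX k)

theorem full_step {α : Type} {far : Set α → Set α → Prop} {R Ry Rz Rm : α → α → Prop}
    {x y z a0 b0 ls lt : α} {C1 C2 Vy Vz Vm S1 S2 A B : Set α}
    (H : Split R Ry Rz Rm x y z a0 b0 C1 C2 Vy Vz Vm S1 S2)
    (fsymm : ∀ X Y, far X Y → far Y X)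
    (fmono : ∀ X Y Y', far X Y → Y' ⊆ Y → far X Y')
    (fdisj : ∀ X Y a, far X Y → a ∈ X → a ∈ Y → False)
    (fyz : ∀ X Y, far X Y → y ∈ X → z ∈ Y → False)
    (hm : ∀ X Y, far X Y → (∃ c1 ∈ C1, ∃ c2 ∈ C2, Cn Rm X c1 c2) →
      (∃ c1 ∈ C1, ∃ c2 ∈ C2, Cn Rm Y c1 c2) → False)
    (hls : ls ∈ Vy) (hlt : lt ∈ Vz) (hA : A ⊆ Vy) (hB : B ⊆ Vz)
    (Fy : Full far Ry y ls a0 A C1) (Fz : Full far Rz z b0 lt C2 B) :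
    Full far R x ls lt A B := by
  refine ⟨half_step H fsymm fmono fdisj fyz hm hls hlt hA hB Fy Fz,
    half_step H.mirror fsymm fmono fdisj (fun X Y h a b => fyz Y X (fsymm _ _ h) b a) ?_
      hlt hls hB hA ⟨Fz.2, Fz.1⟩ ⟨Fy.2, Fy.1⟩⟩
  rintro X Y hf ⟨c1, h1, c2, h2, h3⟩ ⟨d1, k1, d2, k2, k3⟩
  exact hm X Y hf ⟨c2, h2, c1, h1, h3.symm H.msymm⟩ ⟨d2, k2, d1, k1, k3.symm H.msymm⟩

theorem half_leaf {α : Type} {far : Set α → Set α → Prop} {R : α → α → Prop}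
    {x : α} {A B : Set α} (hxR : ∀ v, ¬ R v x) (hxA : x ∉ A)
    (hm : ∀ X Y, far X Y → (∃ c1 ∈ A, ∃ c2 ∈ B, Cn R X c1 c2) →
      (∃ c1 ∈ A, ∃ c2 ∈ B, Cn R Y c1 c2) → False) : Half far R x x x A B := by
  have key : ∀ X s t, s ∈ A → (t = x ∨ t ∈ B ∨ t = x) → Cn R X s t → t ∈ B := by
    intro X s t hs ht h
    have : t ≠ x := h.closed (fun w => w ≠ x) (fun e => hxA (e ▸ hs))
      (fun a b _ hab _ _ e => hxR a (e ▸ hab))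
    grind
  constructor
  · intro X Y s t s' t' hf hs hs' ht ht' h h'
    by_contra hcon
    push Not at hcon
    have h1 : s ∈ A := by grind
    have h2 : s' ∈ A := by grind
    exact hm X Y hf ⟨s, h1, t, key X s t h1 ht h, h⟩ ⟨s', h2, t', key Y s' t' h2 ht' h', h'⟩
  · intro X Y t s' t' _ _ _ _ h _
    exact h.1

theorem full_leaf {α : Type} {far : Set α → Set α → Prop} {R : α → α → Prop}
    {x : α} {A B : Set α} (hR : ∀ a b, R a b → R b a) (hxR : ∀ v, ¬ R v x) (hxA : x ∉ A)
    (hxB : x ∉ B)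
    (hm : ∀ X Y, far X Y → (∃ c1 ∈ A, ∃ c2 ∈ B, Cn R X c1 c2) →
      (∃ c1 ∈ A, ∃ c2 ∈ B, Cn R Y c1 c2) → False) : Full far R x x x A B := by
  refine ⟨half_leaf hxR hxA hm, half_leaf hxR hxB ?_⟩
  rintro X Y hf ⟨c1, h1, c2, h2, h3⟩ ⟨d1, k1, d2, k2, k3⟩
  exact hm X Y hf ⟨c2, h2, c1, h1, h3.symm hR⟩ ⟨d2, k2, d1, k1, k3.symm hR⟩

end GA
namespace Ghdm

theorem natToBits_succ (q i : ℕ) :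
    natToBits (q + 1) i = natToBits q (i / 2) ++ [Nat.testBit i 0] := by
  unfold natToBits
  rw [List.range_succ, List.map_append]
  congr 1
  · apply List.map_congr_left
    intro a ha
    rw [List.mem_range] at ha
    have : q + 1 - 1 - a = (q - 1 - a) + 1 := by omega
    rw [this, Nat.testBit_succ]
  · simp

theorem natToBits_length (q i : ℕ) : (natToBits q i).length = q := by
  simp [natToBits]

theorem natToBits_append (n a : ℕ) (b : Bool) :
    natToBits n a ++ [b] = natToBits (n + 1) (2 * a + b.toNat) := by
  rw [natToBits_succ]
  cases b
  · simp
  · have : (2 * a + 1) / 2 = a := by omega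
    simp [this]

theorem natToBits_prefix (r : ℕ) : ∀ n a κ, κ / 2 ^ r = a → natToBits n a <+: natToBits (n + r) κ := by
  induction r with
  | zero =>
    intro n a κ h
    simp at h
    subst h
    exact List.prefix_rfl
  | succ r ih =>
    intro n a κ h
    rw [← Nat.add_assoc, natToBits_succ]
    refine (ih n a (κ / 2) ?_).trans (List.prefix_append _ _)
    rw [← h, Nat.div_div_eq_div_mul, pow_succ, mul_comm]

theorem natToBits_zero (h : ℕ) : natToBits h 0 = List.replicate h false := by
  induction h with
  | zero => rfl
  | succ q ih => rw [natToBits_succ, List.replicate_succ']; simp [ih]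

theorem natToBits_last (h : ℕ) : natToBits h (2 ^ h - 1) = List.replicate h true := by
  induction h with
  | zero => rfl
  | succ q ih =>
    have hp : 0 < 2 ^ q := by positivity
    have e : (2 ^ (q + 1) - 1) / 2 = 2 ^ q - 1 := by rw [pow_succ]; omega
    have e2 : Nat.testBit (2 ^ (q + 1) - 1) 0 = true := by
      rw [Nat.testBit_zero, pow_succ]; simp; omega
    rw [natToBits_succ, List.replicate_succ', e, ih, e2]

theorem rep_ne {h : ℕ} (hh : 1 ≤ h) : List.replicate h true ≠ List.replicate h false := by
  obtain ⟨q, rfl⟩ : ∃ q, h = q + 1 := ⟨h - 1, by omega⟩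
  simp [List.replicate_succ]

theorem rep_ne_nil {h : ℕ} (hh : 1 ≤ h) (b : Bool) : List.replicate h b ≠ [] := by
  obtain ⟨q, rfl⟩ : ∃ q, h = q + 1 := ⟨h - 1, by omega⟩
  simp [List.replicate_succ]

theorem NN_pos (h : ℕ) : 1 ≤ NN h := by
  unfold NN
  have : 0 < 2 ^ h := by positivity
  rw [pow_succ]; omega

theorem NN_eq (h : ℕ) : NN h + 1 = 2 * 2 ^ h := by
  unfold NN
  have : 0 < 2 ^ h := by positivity
  rw [pow_succ]; omega

def lev : Raw → ℕ
  | .path _ => 1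
  | .tree j _ _ => j
  | .spine j _ _ _ _ _ => j

def DD (h d j : ℕ) : ℕ := NN h ^ (j - 1) * (d + 1)

def lf (h d : ℕ) : Raw → ℕ
  | .path k => k
  | .tree e i p => if p = List.replicate h true then i * DD h d e else (i - 1) * DD h d e
  | .spine e i _ _ _ _ => (i - 1) * DD h d e

def rt (h d : ℕ) : Raw → ℕ
  | .path k => k
  | .tree e i p => if p = List.replicate h false then (i - 1) * DD h d e else i * DD h d e
  | .spine e i _ _ _ _ => i * DD h d e

theorem DD_pos (h d j : ℕ) : 0 < DD h d j :=
  Nat.mul_pos (pow_pos (NN_pos h) _) (Nat.succ_pos _)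

theorem DD_mul (h d : ℕ) {e j : ℕ} (he : 1 ≤ e) (hj : e ≤ j) :
    DD h d j = NN h ^ (j - e) * DD h d e := by
  unfold DD
  rw [← mul_assoc, ← pow_add]
  congr 2
  omega

theorem lf_le_rt {h : ℕ} (hh : 1 ≤ h) (d : ℕ) (w : Raw) : lf h d w ≤ rt h d w := by
  cases w with
  | path k => exact le_rfl
  | tree e i p =>
    simp only [lf, rt]
    have := rep_ne hh
    split_ifs with h1 h2
    · exact absurd (h1.symm.trans h2) this
    · exact le_rfl
    · exact le_rfl
    · exact Nat.mul_le_mul_right _ (by omega)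
  | spine e i _ _ _ _ => exact Nat.mul_le_mul_right _ (by omega)

def nd (h m j i : ℕ) (p : List Bool) : Raw := canon h m (.tree j i p)

theorem nd_inj {h m j i : ℕ} (hh : 1 ≤ h) {p q : List Bool}
    (e : nd h m j i p = nd h m j i q) : p = q := by
  have h1 := rep_ne hh
  have h2 := rep_ne_nil hh true
  simp only [nd, canon] at e
  split_ifs at e <;> simp only [Raw.tree.injEq] at e <;> grind

theorem nd_lev {h m j i : ℕ} (hj : j ≤ m) (p : List Bool) : j ≤ lev (nd h m j i p) := by
  simp only [nd, canon]
  split_ifs <;> simp [lev, hj]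

theorem nd_lev_eq {h m j i : ℕ} {p : List Bool} (hp : p ≠ []) : lev (nd h m j i p) = j := by
  simp only [nd, canon]
  split_ifs <;> simp_all [lev]

theorem nd_ne_spine {h m j i : ℕ} (p : List Bool) (a b c d e f : ℕ) :
    nd h m j i p ≠ .spine a b c d e f := by
  simp only [nd, canon]
  split_ifs <;> simp

theorem nd_short {h m j i : ℕ} {p : List Bool} (hp : p ≠ []) (hl : p.length < h) :
    nd h m j i p = .tree j i p := by
  simp only [nd, canon]
  rw [if_neg hp, if_neg]
  rintro ⟨h1, _⟩
  rw [h1] at hl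
  simp at hl

theorem nd_bd {h d m j i : ℕ} (hh : 1 ≤ h) (hi : 1 ≤ i) {p : List Bool} (hp : p ≠ []) :
    (i - 1) * DD h d j ≤ lf h d (nd h m j i p) ∧ rt h d (nd h m j i p) ≤ i * DD h d j := by
  have h1 := rep_ne hh
  have h3 : (i - 1) * DD h d j ≤ i * DD h d j := Nat.mul_le_mul_right _ (by omega)
  simp only [nd, canon]
  rw [if_neg hp]
  split_ifs with h2
  · simp [lf, rt, h1, h3]
  · simp only [lf, rt]
    constructor <;> split_ifs <;> first | exact le_rfl | exact h3

theorem V_facts {h d jv g e : ℕ} (hh : 1 ≤ h) (m : ℕ) (he : 1 ≤ e) (hej : e ≤ jv) :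
    lev (VsetElem h d jv g e) ≤ jv ∧ lf h d (VsetElem h d jv g e) = (g - 1) * DD h d jv ∧
    rt h d (VsetElem h d jv g e) = (g - 1) * DD h d jv ∧
    canon h m (VsetElem h d jv g e) = VsetElem h d jv g e := by
  have h1 := rep_ne hh
  have h2 := rep_ne_nil hh
  have hD := DD_mul h d he hej
  unfold VsetElem
  split_ifs with c1 c2
  · subst c1
    refine ⟨hej, ?_, ?_, rfl⟩ <;> simp [lf, rt, DD, mul_assoc]
  · rw [hD, ← mul_assoc, c2]
    refine ⟨hej, ?_, ?_, ?_⟩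
    · simp [lf, h1.symm]
    · simp [rt]
    · simp [canon]; try omega
  · rw [hD, ← mul_assoc]
    refine ⟨hej, ?_, ?_, ?_⟩
    · simp [lf]
    · simp [rt, h1]
    · simp [canon, h1]; try omega

def Adj (h d m : ℕ) (u v : Raw) : Prop :=
  Valid h d m u ∧ Valid h d m v ∧ u ≠ RootR m ∧ v ≠ RootR m ∧ (rel h d m u v ∨ rel h d m v u)

def EC (h d m : ℕ) (u v : Raw) : Prop :=
  (∃ k, u = .path k ∧ v = .path (k + 1)) ∨
  (∃ j i p c, 2 ≤ j ∧ 1 ≤ i ∧ p ≠ [] ∧ p.length < h ∧ u = nd h m j i p ∧ v = nd h m j i (p ++ [c])) ∨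
  (∃ j i k t e s, u = .spine j i k t e s ∧ Valid h d m u ∧
    ((∃ s', v = .spine j i k t e s') ∨ v = nd h m j i (leafPos h k) ∨
      v = VsetElem h d (j - 1) ((i - 1) * NN h + t) e))

theorem ec_of_raw {h d m : ℕ} (hh : 1 ≤ h) (hd : 2 ≤ d) {a b : Raw} (hab : rawAdj h d a b)
    (ha : Valid h d m (canon h m a)) (hb : Valid h d m (canon h m b))
    (ra : canon h m a ≠ RootR m) :
    EC h d m (canon h m a) (canon h m b) ∨ EC h d m (canon h m b) (canon h m a) := by
  cases hab with
  | base k => exact Or.inl (Or.inl ⟨k, rfl, rfl⟩)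
  | child j i p c hl =>
    have hp : p ≠ [] := by
      rintro rfl
      exact ra (by simp [canon, RootR])
    have e := nd_short (h := h) (m := m) (j := j) (i := i) hp hl
    have e' : canon h m (.tree j i p) = .tree j i p := e
    rw [e'] at ha
    exact Or.inl (Or.inr (Or.inl ⟨j, i, p, c, ha.1, ha.2.2.1, hp, hl, rfl, rfl⟩))
  | step j i k t e s =>
    exact Or.inl (Or.inr (Or.inr ⟨j, i, k, t, e, s, rfl, ha, Or.inl ⟨s + 1, rfl⟩⟩))
  | toLeaf j i k t e =>
    exact Or.inr (Or.inr (Or.inr ⟨j, i, k, t, e, 1, rfl, hb, Or.inr (Or.inl rfl)⟩))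
  | toV j i k t e =>
    refine Or.inl (Or.inr (Or.inr ⟨j, i, k, t, e, d, rfl, ha, Or.inr (Or.inr ?_)⟩))
    simp only [canon, Valid] at ha
    exact (V_facts hh m (by omega) (by omega)).2.2.2
  | short j i k t e h0 => omega

theorem ec_of_adj {h d m : ℕ} (hh : 1 ≤ h) (hd : 2 ≤ d) {u v : Raw} (H : Adj h d m u v) :
    EC h d m u v ∨ EC h d m v u := by
  obtain ⟨h1, h2, h3, h4, ⟨a, b, hab, rfl, rfl⟩ | ⟨a, b, hab, rfl, rfl⟩⟩ := H
  · exact ec_of_raw hh hd hab h1 h2 h3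
  · exact (ec_of_raw hh hd hab h2 h1 h4).symm

/-- tree and spine edges stay inside one copy. -/
theorem ec_bd {h d m : ℕ} (hh : 1 ≤ h) {u v : Raw} (H : EC h d m u v) :
    (∃ k, u = .path k ∧ v = .path (k + 1)) ∨
    ∃ j i, 2 ≤ j ∧ 1 ≤ i ∧ lev u = j ∧ lev v ≤ j ∧
      (i - 1) * DD h d j = lf h d u ∧ rt h d u = i * DD h d j ∧
      (i - 1) * DD h d j ≤ lf h d v ∧ rt h d v ≤ i * DD h d j := by
  rcases H with H | ⟨j, i, p, c, hj, hi, hp, hl, rfl, rfl⟩ | ⟨j, i, k, t, e, s, rfl, hv, H⟩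
  · exact Or.inl H
  · refine Or.inr ⟨j, i, hj, hi, nd_lev_eq hp, (nd_lev_eq (by simp)).le, ?_, ?_, nd_bd hh hi (by simp)⟩
    · rw [nd_short hp hl]
      simp only [lf]
      rw [if_neg]
      rintro rfl
      simp at hl
    · rw [nd_short hp hl]
      simp only [rt]
      rw [if_neg]
      rintro rfl
      simp at hl
  · simp only [Valid] at hv
    refine Or.inr ⟨j, i, hv.1, by omega, rfl, ?_⟩
    have h3 : (i - 1) * DD h d j ≤ i * DD h d j := Nat.mul_le_mul_right _ (by omega)
    rcases H with ⟨s', rfl⟩ | rfl | rfl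
    · exact ⟨le_rfl, rfl, rfl, le_rfl, le_rfl⟩
    · have hp : leafPos h k ≠ [] := by
        intro e
        have := congrArg List.length e
        rw [leafPos, natToBits_length] at this
        simp at this
        omega
      exact ⟨(nd_lev_eq hp).le, rfl, rfl, nd_bd hh (by omega) hp⟩
    · have V := V_facts (h := h) (d := d) (jv := j - 1) (g := (i - 1) * NN h + t) (e := e) hh m
        (by omega) (by omega)
      have hD : DD h d j = NN h * DD h d (j - 1) := by
        have := DD_mul h d (e := j - 1) (j := j) (by omega) (by omega)
        rw [this, show j - (j - 1) = 1 by omega, pow_one]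
      have hN := NN_eq h
      have h2 : 2 ^ (h + 1) = 2 * 2 ^ h := by rw [pow_succ]; ring
      obtain ⟨q, rfl⟩ : ∃ q, i = q + 1 := ⟨i - 1, by omega⟩
      refine ⟨by omega, rfl, rfl, ?_, ?_⟩
      · rw [V.2.1, hD, ← mul_assoc]
        exact Nat.mul_le_mul_right _ (by omega)
      · rw [V.2.2.1, hD, ← mul_assoc]
        refine Nat.mul_le_mul_right _ ?_
        rw [Nat.add_mul]
        simp only [Nat.add_sub_cancel]
        omega

def Rng (h d jv a b : ℕ) (w : Raw) : Prop :=
  lev w ≤ jv ∧ a * DD h d jv ≤ lf h d w ∧ rt h d w ≤ b * DD h d jv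

theorem Rng.mono {h d jv a b a' b' : ℕ} {w : Raw} (H : Rng h d jv a b w) (ha : a' ≤ a)
    (hb : b ≤ b') : Rng h d jv a' b' w :=
  ⟨H.1, (Nat.mul_le_mul_right _ ha).trans H.2.1, H.2.2.trans (Nat.mul_le_mul_right _ hb)⟩

theorem Rng.inter {h d jv a b a' b' : ℕ} {w : Raw} (H : Rng h d jv a b w)
    (H' : Rng h d jv a' b' w) : Rng h d jv a' b w :=
  ⟨H.1, H'.2.1, H.2.2⟩

theorem Rng.le {h d jv a b : ℕ} (hh : 1 ≤ h) {w : Raw} (H : Rng h d jv a b w) : a ≤ b :=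
  Nat.le_of_mul_le_mul_right (H.2.1.trans ((lf_le_rt hh d w).trans H.2.2)) (DD_pos h d jv)

theorem straddle_ec {h d m jv : ℕ} (hh : 1 ≤ h) {u v : Raw} (H : EC h d m u v)
    (hu : lev u ≤ jv) (c : ℕ) :
    (rt h d u ≤ c * DD h d jv ∧ rt h d v ≤ c * DD h d jv) ∨
    (c * DD h d jv ≤ lf h d u ∧ c * DD h d jv ≤ lf h d v) := by
  rcases ec_bd hh H with ⟨k, rfl, rfl⟩ | ⟨j, i, hj, hi, rfl, h2, h3, h4, h5, h6⟩
  · simp only [lf, rt]; omega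
  · rw [DD_mul h d (show 1 ≤ lev u by omega) hu, ← mul_assoc]
    rw [← h3, h4]
    by_cases hc : i ≤ c * NN h ^ (jv - lev u)
    · left
      have := Nat.mul_le_mul_right (DD h d (lev u)) hc
      exact ⟨this, h6.trans this⟩
    · right
      have := Nat.mul_le_mul_right (DD h d (lev u)) (show c * NN h ^ (jv - lev u) ≤ i - 1 by omega)
      exact ⟨this, this.trans h5⟩

theorem Adj.split {h d m jv a b : ℕ} (hh : 1 ≤ h) (hd : 2 ≤ d) {u v : Raw} (H : Adj h d m u v)
    (hu : Rng h d jv a b u) (hv : Rng h d jv a b v) (c : ℕ) :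
    (Rng h d jv a c u ∧ Rng h d jv a c v) ∨ (Rng h d jv c b u ∧ Rng h d jv c b v) := by
  have : (rt h d u ≤ c * DD h d jv ∧ rt h d v ≤ c * DD h d jv) ∨
    (c * DD h d jv ≤ lf h d u ∧ c * DD h d jv ≤ lf h d v) := by
    rcases ec_of_adj hh hd H with h1 | h1
    · exact straddle_ec hh h1 hu.1 c
    · have := straddle_ec hh h1 hv.1 c
      tauto
  rcases this with h1 | h1
  · exact Or.inl ⟨⟨hu.1, hu.2.1, h1.1⟩, ⟨hv.1, hv.2.1, h1.2⟩⟩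
  · exact Or.inr ⟨⟨hu.1, h1.1, hu.2.2⟩, ⟨hv.1, h1.2, hv.2.2⟩⟩

end Ghdm

namespace Ghdm

open GA

def LE (h d m jv a b : ℕ) (u v : Raw) : Prop :=
  Adj h d m u v ∧ Rng h d jv a b u ∧ Rng h d jv a b v

theorem Adj.symm {h d m : ℕ} {u v : Raw} (H : Adj h d m u v) : Adj h d m v u :=
  ⟨H.2.1, H.1, H.2.2.2.1, H.2.2.1, H.2.2.2.2.symm⟩

theorem LE.symm {h d m jv a b : ℕ} {u v : Raw} (H : LE h d m jv a b u v) : LE h d m jv a b v u :=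
  ⟨H.1.symm, H.2.2, H.2.1⟩

def far (h d m : ℕ) (X Y : Set Raw) : Prop :=
  (∀ w ∈ X, Valid h d m w ∧ w ≠ RootR m) ∧ (∀ w ∈ Y, Valid h d m w ∧ w ≠ RootR m) ∧
  (∀ w ∈ X, w ∉ Y) ∧
  ∀ u ∈ X, ∀ v ∈ Y, ∀ w, Valid h d m w → w ≠ u → w ≠ v → rel h d m w u → rel h d m w v → False

theorem far.symm {h d m : ℕ} {X Y : Set Raw} (H : far h d m X Y) : far h d m Y X :=
  ⟨H.2.1, H.1, fun w h1 h2 => H.2.2.1 w h2 h1,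
    fun u hu v hv w h1 h2 h3 h4 h5 => H.2.2.2 v hv u hu w h1 h3 h2 h5 h4⟩

theorem far.mono {h d m : ℕ} {X Y Y' : Set Raw} (H : far h d m X Y) (hY : Y' ⊆ Y) :
    far h d m X Y' :=
  ⟨H.1, fun w hw => H.2.1 w (hY hw), fun w h1 h2 => H.2.2.1 w h1 (hY h2),
    fun u hu v hv => H.2.2.2 u hu v (hY hv)⟩

def leaf (h m j i0 κ : ℕ) : Raw := nd h m j (i0 + 1) (natToBits h κ)

def S1 (j i0 κ : ℕ) : Set Raw := {w | ∃ e s, w = .spine j (i0 + 1) (κ + 1) (2 * κ + 3) e s}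

def S2 (j i0 κ : ℕ) : Set Raw := {w | ∃ e s, w = .spine j (i0 + 1) (κ + 2) (2 * κ + 2) e s}

def TE (h m j i0 : ℕ) (p : List Bool) (u v : Raw) : Prop :=
  ∃ p' b, p <+: p' ∧ p'.length < h ∧ u = nd h m j (i0 + 1) p' ∧ v = nd h m j (i0 + 1) (p' ++ [b])

def SpE1 (h d m j i0 κ : ℕ) (u v : Raw) : Prop :=
  u ∈ S1 j i0 κ ∧ (v ∈ S1 j i0 κ ∨ v = leaf h m j i0 κ ∨
    Rng h d (j - 1) (i0 * NN h + 2 * κ + 2) (i0 * NN h + 2 * κ + 2) v)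

def SpE2 (h d m j i0 κ : ℕ) (u v : Raw) : Prop :=
  u ∈ S2 j i0 κ ∧ (v ∈ S2 j i0 κ ∨ v = leaf h m j i0 (κ + 1) ∨
    Rng h d (j - 1) (i0 * NN h + 2 * κ + 1) (i0 * NN h + 2 * κ + 1) v)

def SpE (h d m j i0 κ : ℕ) (u v : Raw) : Prop :=
  SpE1 h d m j i0 κ u v ∨ SpE1 h d m j i0 κ v u ∨ SpE2 h d m j i0 κ u v ∨ SpE2 h d m j i0 κ v u

def RG (h d m j i0 : ℕ) (p : List Bool) (lo hi : ℕ) (u v : Raw) : Prop :=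
  LE h d m (j - 1) (i0 * NN h + 2 * lo) (i0 * NN h + 2 * hi - 1) u v ∨
  TE h m j i0 p u v ∨ TE h m j i0 p v u ∨
  ∃ κ, lo ≤ κ ∧ κ + 1 < hi ∧ SpE h d m j i0 κ u v

def VG (h d m j i0 : ℕ) (p : List Bool) (lo hi : ℕ) : Set Raw :=
  {w | Rng h d (j - 1) (i0 * NN h + 2 * lo) (i0 * NN h + 2 * hi - 1) w ∨
    (∃ p', p <+: p' ∧ p'.length ≤ h ∧ w = nd h m j (i0 + 1) p') ∨
    ∃ κ, lo ≤ κ ∧ κ + 1 < hi ∧ (w ∈ S1 j i0 κ ∨ w ∈ S2 j i0 κ)}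

theorem SpE.symm {h d m j i0 κ : ℕ} {u v : Raw} (H : SpE h d m j i0 κ u v) :
    SpE h d m j i0 κ v u := by
  unfold SpE at *
  tauto

theorem RG.symm {h d m j i0 lo hi : ℕ} {p : List Bool} {u v : Raw}
    (H : RG h d m j i0 p lo hi u v) : RG h d m j i0 p lo hi v u := by
  rcases H with H | H | H | ⟨κ, h1, h2, H⟩
  · exact Or.inl H.symm
  · exact Or.inr (Or.inr (Or.inl H))
  · exact Or.inr (Or.inl H)
  · exact Or.inr (Or.inr (Or.inr ⟨κ, h1, h2, H.symm⟩))

theorem low_nd {h d m j a b i : ℕ} (hj : 2 ≤ j) (hjm : j ≤ m) {p : List Bool} :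
    ¬ Rng h d (j - 1) a b (nd h m j i p) := by
  intro H
  have := nd_lev (h := h) (i := i) hjm p
  have := H.1
  omega

theorem low_spine {h d j a b i k t e s : ℕ} (hj : 2 ≤ j) :
    ¬ Rng h d (j - 1) a b (.spine j i k t e s) := by
  intro H
  have := H.1
  simp only [lev] at this
  omega

theorem low_S1 {h d j a b i0 κ : ℕ} (hj : 2 ≤ j) {w : Raw} (H : w ∈ S1 j i0 κ) :
    ¬ Rng h d (j - 1) a b w := by
  obtain ⟨e, s, rfl⟩ := H
  exact low_spine hj

theorem low_S2 {h d j a b i0 κ : ℕ} (hj : 2 ≤ j) {w : Raw} (H : w ∈ S2 j i0 κ) :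
    ¬ Rng h d (j - 1) a b w := by
  obtain ⟨e, s, rfl⟩ := H
  exact low_spine hj

theorem nd_S1 {h m j i i0 κ : ℕ} {p : List Bool} : nd h m j i p ∉ S1 j i0 κ := by
  rintro ⟨e, s, H⟩
  exact nd_ne_spine _ _ _ _ _ _ _ H

theorem nd_S2 {h m j i i0 κ : ℕ} {p : List Bool} : nd h m j i p ∉ S2 j i0 κ := by
  rintro ⟨e, s, H⟩
  exact nd_ne_spine _ _ _ _ _ _ _ H

theorem S12 {j i0 κ κ' : ℕ} {w : Raw} (H : w ∈ S1 j i0 κ) (H' : w ∈ S2 j i0 κ') : False := by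
  obtain ⟨e, s, rfl⟩ := H
  obtain ⟨e', s', h⟩ := H'
  simp only [Raw.spine.injEq] at h
  omega

theorem S11 {j i0 κ κ' : ℕ} {w : Raw} (H : w ∈ S1 j i0 κ) (H' : w ∈ S1 j i0 κ') : κ = κ' := by
  obtain ⟨e, s, rfl⟩ := H
  obtain ⟨e', s', h⟩ := H'
  simp only [Raw.spine.injEq] at h
  omega

theorem S22 {j i0 κ κ' : ℕ} {w : Raw} (H : w ∈ S2 j i0 κ) (H' : w ∈ S2 j i0 κ') : κ = κ' := by
  obtain ⟨e, s, rfl⟩ := H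
  obtain ⟨e', s', h⟩ := H'
  simp only [Raw.spine.injEq] at h
  omega

theorem RG_VG {h d m j i0 lo hi : ℕ} {p : List Bool}
    (hp : ∀ κ, lo ≤ κ → κ < hi → p <+: natToBits h κ) {u v : Raw}
    (H : RG h d m j i0 p lo hi u v) : u ∈ VG h d m j i0 p lo hi ∧ v ∈ VG h d m j i0 p lo hi := by
  have hT : ∀ u v, TE h m j i0 p u v →
      u ∈ VG h d m j i0 p lo hi ∧ v ∈ VG h d m j i0 p lo hi := by
    rintro u v ⟨p', b, h1, h2, rfl, rfl⟩
    refine ⟨Or.inr (Or.inl ⟨p', h1, h2.le, rfl⟩), Or.inr (Or.inl ⟨p' ++ [b], ?_, ?_, rfl⟩)⟩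
    · exact h1.trans (List.prefix_append _ _)
    · simp; omega
  have hS1 : ∀ κ u v, lo ≤ κ → κ + 1 < hi → SpE1 h d m j i0 κ u v →
      u ∈ VG h d m j i0 p lo hi ∧ v ∈ VG h d m j i0 p lo hi := by
    rintro κ u v h1 h2 ⟨h3, h4⟩
    refine ⟨Or.inr (Or.inr ⟨κ, h1, h2, Or.inl h3⟩), ?_⟩
    rcases h4 with h4 | rfl | h4
    · exact Or.inr (Or.inr ⟨κ, h1, h2, Or.inl h4⟩)
    · exact Or.inr (Or.inl ⟨_, hp κ h1 (by omega), (natToBits_length _ _).le, rfl⟩)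
    · exact Or.inl (h4.mono (by omega) (by omega))
  have hS2 : ∀ κ u v, lo ≤ κ → κ + 1 < hi → SpE2 h d m j i0 κ u v →
      u ∈ VG h d m j i0 p lo hi ∧ v ∈ VG h d m j i0 p lo hi := by
    rintro κ u v h1 h2 ⟨h3, h4⟩
    refine ⟨Or.inr (Or.inr ⟨κ, h1, h2, Or.inr h3⟩), ?_⟩
    rcases h4 with h4 | rfl | h4
    · exact Or.inr (Or.inr ⟨κ, h1, h2, Or.inr h4⟩)
    · exact Or.inr (Or.inl ⟨_, hp (κ + 1) (by omega) (by omega), (natToBits_length _ _).le, rfl⟩)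
    · exact Or.inl (h4.mono (by omega) (by omega))
  rcases H with H | H | H | ⟨κ, h1, h2, H | H | H | H⟩
  · exact ⟨Or.inl H.2.1, Or.inl H.2.2⟩
  · exact hT _ _ H
  · exact (hT _ _ H).symm
  · exact hS1 κ _ _ h1 h2 H
  · exact (hS1 κ _ _ h1 h2 H).symm
  · exact hS2 κ _ _ h1 h2 H
  · exact (hS2 κ _ _ h1 h2 H).symm

theorem prefix_contra {p q : List Bool} (h1 : p ++ [false] <+: q) (h2 : p ++ [true] <+: q) :
    False := by
  have := List.prefix_of_prefix_length_le h1 h2 (by simp)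
  rw [List.prefix_append_right_inj] at this
  simp at this

theorem prefix_ext {p q : List Bool} (h1 : p <+: q) (h2 : q ≠ p) : ∃ b, p ++ [b] <+: q := by
  obtain ⟨l, rfl⟩ := h1
  cases l with
  | nil => simp at h2
  | cons b l => exact ⟨b, ⟨l, by simp⟩⟩

theorem split_gadget {h d m j i0 lo mid hi : ℕ} {p : List Bool} (hh : 1 ≤ h) (hd : 2 ≤ d)
    (hj : 2 ≤ j) (hjm : j ≤ m) (h1 : lo < mid) (h2 : mid < hi) (hl : p.length < h)
    (hp1 : ∀ κ, lo ≤ κ → κ < mid → p ++ [false] <+: natToBits h κ)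
    (hp2 : ∀ κ, mid ≤ κ → κ < hi → p ++ [true] <+: natToBits h κ) :
    Split (RG h d m j i0 p lo hi) (RG h d m j i0 (p ++ [false]) lo mid)
      (RG h d m j i0 (p ++ [true]) mid hi)
      (LE h d m (j - 1) (i0 * NN h + 2 * mid - 1) (i0 * NN h + 2 * mid))
      (nd h m j (i0 + 1) p) (nd h m j (i0 + 1) (p ++ [false])) (nd h m j (i0 + 1) (p ++ [true]))
      (leaf h m j i0 (mid - 1)) (leaf h m j i0 mid)
      {w | Rng h d (j - 1) (i0 * NN h + 2 * mid - 1) (i0 * NN h + 2 * mid - 1) w}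
      {w | Rng h d (j - 1) (i0 * NN h + 2 * mid) (i0 * NN h + 2 * mid) w}
      (VG h d m j i0 (p ++ [false]) lo mid) (VG h d m j i0 (p ++ [true]) mid hi)
      {w | Rng h d (j - 1) (i0 * NN h + 2 * mid - 1) (i0 * NN h + 2 * mid) w}
      (S1 j i0 (mid - 1)) (S2 j i0 (mid - 1)) where
  edge := by
    intro a b H ha hb
    have hT : ∀ u v, u ≠ nd h m j (i0 + 1) p → TE h m j i0 p u v →
        TE h m j i0 (p ++ [false]) u v ∨ TE h m j i0 (p ++ [true]) u v := by
      rintro u v hu ⟨p', b, h3, h4, rfl, rfl⟩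
      have : p' ≠ p := by rintro rfl; exact hu rfl
      obtain ⟨c, hc⟩ := prefix_ext h3 this
      cases c
      · exact Or.inl ⟨p', b, hc, h4, rfl, rfl⟩
      · exact Or.inr ⟨p', b, hc, h4, rfl, rfl⟩
    rcases H with H | H | H | ⟨κ, h3, h4, H⟩
    · rcases H.1.split hh hd H.2.1 H.2.2 (i0 * NN h + 2 * mid - 1) with h5 | h5
      · exact Or.inl (Or.inl ⟨H.1, h5.1, h5.2⟩)
      · rcases H.1.split hh hd h5.1 h5.2 (i0 * NN h + 2 * mid) with h6 | h6
        · exact Or.inr (Or.inr (Or.inl ⟨H.1, h6.1, h6.2⟩))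
        · exact Or.inr (Or.inl (Or.inl ⟨H.1, h6.1, h6.2⟩))
    · rcases hT _ _ ha H with H | H
      · exact Or.inl (Or.inr (Or.inl H))
      · exact Or.inr (Or.inl (Or.inr (Or.inl H)))
    · rcases hT _ _ hb H with H | H
      · exact Or.inl (Or.inr (Or.inr (Or.inl H)))
      · exact Or.inr (Or.inl (Or.inr (Or.inr (Or.inl H))))
    · rcases lt_trichotomy (κ + 1) mid with h5 | h5 | h5
      · exact Or.inl (Or.inr (Or.inr (Or.inr ⟨κ, h3, h5, H⟩)))
      · subst h5
        right; right; right
        have e1 : i0 * NN h + 2 * (κ + 1) = i0 * NN h + 2 * κ + 2 := by ring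
        have e2 : i0 * NN h + 2 * (κ + 1) - 1 = i0 * NN h + 2 * κ + 1 := by omega
        simp only [Nat.add_sub_cancel, Set.mem_ofPred_eq, e2]
        rw [e1]
        exact H
      · exact Or.inr (Or.inl (Or.inr (Or.inr (Or.inr ⟨κ, by omega, h4, H⟩))))
  xedge := by
    intro v H
    have hx : ∀ κ, nd h m j (i0 + 1) p ≠ leaf h m j i0 κ := by
      intro κ e
      have := nd_inj hh e
      rw [this, natToBits_length] at hl
      omega
    rcases H with H | ⟨p', b, h3, h4, h5, h6⟩ | ⟨p', b, h3, h4, h5, h6⟩ | ⟨κ, h3, h4, H | H | H | H⟩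
    · exact absurd H.2.2 (low_nd hj hjm)
    · have := nd_inj hh h6
      have := h3.length_le
      simp_all
    · have := nd_inj hh h5
      subst this
      cases b
      · exact Or.inl h6
      · exact Or.inr h6
    · rcases H.2 with h5 | h5 | h5
      · exact absurd h5 nd_S1
      · exact absurd h5 (hx _)
      · exact absurd h5 (low_nd hj hjm)
    · exact absurd H.1 nd_S1
    · rcases H.2 with h5 | h5 | h5
      · exact absurd h5 nd_S2
      · exact absurd h5 (hx _)
      · exact absurd h5 (low_nd hj hjm)
    · exact absurd H.1 nd_S2
  symm := fun _ _ => RG.symm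
  ysymm := fun _ _ => RG.symm
  zsymm := fun _ _ => RG.symm
  msymm := fun _ _ => LE.symm
  hy := fun _ _ => RG_VG hp1
  hz := fun _ _ => RG_VG hp2
  hm := fun _ _ H => ⟨H.2.1, H.2.2⟩
  yz := by
    rintro a (H | ⟨p', h3, h4, rfl⟩ | ⟨κ, h3, h4, H⟩) (H' | ⟨q, h5, h6, h7⟩ | ⟨κ', h5, h6, H'⟩)
    · have := (H.inter H').le hh
      omega
    · subst h7
      exact low_nd hj hjm H
    · rcases H' with H' | H'
      · exact low_S1 hj H' H
      · exact low_S2 hj H' H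
    · exact low_nd hj hjm H'
    · have := nd_inj hh h7
      subst this
      exact prefix_contra h3 h5
    · rcases H' with H' | H'
      · exact nd_S1 H'
      · exact nd_S2 H'
    · rcases H with H | H
      · exact low_S1 hj H H'
      · exact low_S2 hj H H'
    · subst h7
      rcases H with H | H
      · exact nd_S1 H
      · exact nd_S2 H
    · rcases H with H | H <;> rcases H' with H' | H'
      · have := S11 H H'; omega
      · exact S12 H H'
      · exact S12 H' H
      · have := S22 H H'; omega
  ym := by
    rintro a (H | ⟨p', h3, h4, rfl⟩ | ⟨κ, h3, h4, H | H⟩) H'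
    · exact H.inter H'
    · exact absurd H' (low_nd hj hjm)
    · exact absurd H' (low_S1 hj H)
    · exact absurd H' (low_S2 hj H)
  zm := by
    rintro a (H | ⟨p', h3, h4, rfl⟩ | ⟨κ, h3, h4, H | H⟩) H'
    · exact Rng.inter H' H
    · exact absurd H' (low_nd hj hjm)
    · exact absurd H' (low_S1 hj H)
    · exact absurd H' (low_S2 hj H)
  s1 := by
    intro a H
    refine ⟨?_, ?_, low_S1 hj H, fun H' => S12 H H'⟩
    · rintro (H' | ⟨p', h3, h4, rfl⟩ | ⟨κ, h3, h4, H' | H'⟩)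
      · exact low_S1 hj H H'
      · exact nd_S1 H
      · have := S11 H H'; omega
      · exact S12 H H'
    · rintro (H' | ⟨p', h3, h4, rfl⟩ | ⟨κ, h3, h4, H' | H'⟩)
      · exact low_S1 hj H H'
      · exact nd_S1 H
      · have := S11 H H'; omega
      · exact S12 H H'
  s2 := by
    intro a H
    refine ⟨?_, ?_, low_S2 hj H, fun H' => S12 H' H⟩
    · rintro (H' | ⟨p', h3, h4, rfl⟩ | ⟨κ, h3, h4, H' | H'⟩)
      · exact low_S2 hj H H'
      · exact nd_S2 H
      · exact S12 H' H
      · have := S22 H H'; omega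
    · rintro (H' | ⟨p', h3, h4, rfl⟩ | ⟨κ, h3, h4, H' | H'⟩)
      · exact low_S2 hj H H'
      · exact nd_S2 H
      · exact S12 H' H
      · have := S22 H H'; omega
  c1 := by
    intro a H
    exact ⟨Or.inl (Rng.mono H (by omega) (by omega)), Rng.mono H (by omega) (by omega)⟩
  c2 := by
    intro a H
    exact ⟨Or.inl (Rng.mono H (by omega) (by omega)), Rng.mono H (by omega) (by omega)⟩
  ha0 := ⟨Or.inr (Or.inl ⟨_, hp1 _ (by omega) (by omega), (natToBits_length _ _).le, rfl⟩),
    low_nd hj hjm⟩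
  hb0 := ⟨Or.inr (Or.inl ⟨_, hp2 _ (by omega) (by omega), (natToBits_length _ _).le, rfl⟩),
    low_nd hj hjm⟩
  yVy := Or.inr (Or.inl ⟨_, List.prefix_rfl, by simp; omega, rfl⟩)
  zVz := Or.inr (Or.inl ⟨_, List.prefix_rfl, by simp; omega, rfl⟩)
  xy := by
    rintro (H' | ⟨p', h3, h4, h5⟩ | ⟨κ, h3, h4, H' | H'⟩)
    · exact low_nd hj hjm H'
    · have := nd_inj hh h5
      have := h3.length_le
      simp_all
    · exact nd_S1 H'
    · exact nd_S2 H'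
  xz := by
    rintro (H' | ⟨p', h3, h4, h5⟩ | ⟨κ, h3, h4, H' | H'⟩)
    · exact low_nd hj hjm H'
    · have := nd_inj hh h5
      have := h3.length_le
      simp_all
    · exact nd_S1 H'
    · exact nd_S2 H'

end Ghdm

namespace Ghdm

open GA

def PH (h d m jv t : ℕ) : Prop :=
  ∀ X Y, far h d m X Y →
    (∃ c1, Rng h d jv t t c1 ∧ ∃ c2, Rng h d jv (t + 1) (t + 1) c2 ∧
      Cn (LE h d m jv t (t + 1)) X c1 c2) →
    (∃ c1, Rng h d jv t t c1 ∧ ∃ c2, Rng h d jv (t + 1) (t + 1) c2 ∧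
      Cn (LE h d m jv t (t + 1)) Y c1 c2) → False

theorem root_valid {h d m : ℕ} (hm : 2 ≤ m) : Valid h d m (RootR m) := by
  simp [RootR, Valid, hm]

theorem nd_valid {h d m j i0 : ℕ} {p : List Bool} (hj : 2 ≤ j) (hjm : j ≤ m)
    (hi : i0 < NN h ^ (m - j)) (hl : p.length < h) : Valid h d m (nd h m j (i0 + 1) p) := by
  by_cases hp : p = []
  · subst hp
    have : nd h m j (i0 + 1) [] = RootR m := by simp [nd, canon, RootR]
    rw [this]
    exact root_valid (by omega)
  · rw [nd_short hp hl]
    refine ⟨hj, hjm, by omega, hi, hl.le, fun e => absurd e hp, fun e => ?_⟩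
    rw [e] at hl
    simp at hl

theorem nd_child {h d m j i : ℕ} {p : List Bool} (hl : p.length < h) (b : Bool) :
    rel h d m (nd h m j i p) (nd h m j i (p ++ [b])) :=
  ⟨_, _, rawAdj.child j i p b hl, rfl, rfl⟩

theorem full_gadget {h d m j i0 : ℕ} (hh : 1 ≤ h) (hd : 2 ≤ d) (hj : 2 ≤ j) (hjm : j ≤ m)
    (hi : i0 < NN h ^ (m - j)) (hPH : ∀ t, t < NN h ^ (m - (j - 1)) → PH h d m (j - 1) t)
    (r : ℕ) : ∀ n a, n + r = h → a < 2 ^ n →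
    Full (far h d m) (RG h d m j i0 (natToBits n a) (a * 2 ^ r) ((a + 1) * 2 ^ r))
      (nd h m j (i0 + 1) (natToBits n a)) (leaf h m j i0 (a * 2 ^ r))
      (leaf h m j i0 ((a + 1) * 2 ^ r - 1))
      {w | Rng h d (j - 1) (i0 * NN h + 2 * (a * 2 ^ r)) (i0 * NN h + 2 * (a * 2 ^ r)) w}
      {w | Rng h d (j - 1) (i0 * NN h + 2 * ((a + 1) * 2 ^ r) - 1)
        (i0 * NN h + 2 * ((a + 1) * 2 ^ r) - 1) w} := by
  have hNN := NN_eq h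
  have hbd : ∀ t, t < NN h → i0 * NN h + t < NN h ^ (m - (j - 1)) := by
    intro t ht
    have e : m - (j - 1) = m - j + 1 := by omega
    rw [e, pow_succ]
    calc i0 * NN h + t < (i0 + 1) * NN h := by rw [Nat.add_mul]; omega
      _ ≤ _ := Nat.mul_le_mul_right _ hi
  induction r with
  | zero =>
    intro n a hn ha
    obtain rfl : n = h := by omega
    simp only [pow_zero, mul_one, Nat.add_sub_cancel]
    have hRG : ∀ u v, RG n d m j i0 (natToBits n a) a (a + 1) u v →
        LE n d m (j - 1) (i0 * NN n + 2 * a) (i0 * NN n + 2 * a + 1) u v := by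
      intro u v H
      rcases H with H | ⟨p', b, h3, h4, h5, h6⟩ | ⟨p', b, h3, h4, h5, h6⟩ | ⟨κ, h3, h4, H⟩
      · have e : i0 * NN n + 2 * (a + 1) - 1 = i0 * NN n + 2 * a + 1 := by omega
        rw [e] at H
        exact H
      · have := h3.length_le
        rw [natToBits_length] at this
        omega
      · have := h3.length_le
        rw [natToBits_length] at this
        omega
      · omega
    have e : i0 * NN n + 2 * (a + 1) - 1 = i0 * NN n + 2 * a + 1 := by omega
    refine full_leaf (fun _ _ => RG.symm) ?_ (low_nd hj hjm) (low_nd hj hjm) ?_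
    · intro v H
      exact low_nd hj hjm (hRG _ _ H).2.2
    · rintro X Y hf ⟨c1, h1, c2, h2, h3⟩ ⟨e1, k1, e2, k2, k3⟩
      rw [e] at h2 k2
      exact hPH (i0 * NN n + 2 * a) (hbd _ (by omega)) X Y hf
        ⟨c1, h1, c2, h2, h3.mono le_rfl (fun _ _ _ _ => hRG _ _)⟩
        ⟨e1, k1, e2, k2, k3.mono le_rfl (fun _ _ _ _ => hRG _ _)⟩
  | succ r ih =>
    intro n a hn ha
    have hr : 0 < 2 ^ r := by positivity
    have hpow : 2 ^ h = 2 ^ n * (2 * 2 ^ r) := by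
      rw [← hn, pow_add, pow_succ]; ring
    have e1 : a * 2 ^ (r + 1) = 2 * a * 2 ^ r := by rw [pow_succ]; ring
    have e2 : (a + 1) * 2 ^ (r + 1) = (2 * a + 1 + 1) * 2 ^ r := by rw [pow_succ]; ring
    rw [e1, e2]
    have hf := natToBits_append n a false
    have ht := natToBits_append n a true
    simp only [Bool.toNat_false, Bool.toNat_true, Nat.add_zero] at hf ht
    have hle : (2 * a + 2) * 2 ^ r ≤ 2 ^ h := by
      rw [hpow]
      calc (2 * a + 2) * 2 ^ r = (a + 1) * (2 * 2 ^ r) := by ring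
        _ ≤ _ := Nat.mul_le_mul_right _ ha
    have x1 : (2 * a + 1) * 2 ^ r = 2 * a * 2 ^ r + 2 ^ r := by ring
    have x2 : (2 * a + 1 + 1) * 2 ^ r = 2 * a * 2 ^ r + 2 ^ r + 2 ^ r := by ring
    have x3 : (2 * a + 2) * 2 ^ r = 2 * a * 2 ^ r + 2 ^ r + 2 ^ r := by ring
    have hpre : ∀ b κ, b * 2 ^ r ≤ κ → κ < (b + 1) * 2 ^ r →
        natToBits (n + 1) b <+: natToBits h κ := by
      intro b κ k1 k2
      have := natToBits_prefix r (n + 1) b κ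
        (Nat.div_eq_of_lt_le k1 k2)
      rwa [show n + 1 + r = h by omega] at this
    have H := split_gadget (h := h) (d := d) (m := m) (j := j) (i0 := i0) (lo := 2 * a * 2 ^ r)
      (mid := (2 * a + 1) * 2 ^ r) (hi := (2 * a + 1 + 1) * 2 ^ r) (p := natToBits n a) hh hd hj hjm
      (by omega) (by omega) (by rw [natToBits_length]; omega)
      (by rw [hf]; exact hpre (2 * a)) (by rw [ht]; exact hpre (2 * a + 1))
    have Fy := ih (n + 1) (2 * a) (by omega) (by rw [pow_succ]; omega)
    have Fz := ih (n + 1) (2 * a + 1) (by omega) (by rw [pow_succ]; omega)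
    rw [← hf] at Fy
    rw [← ht] at Fz
    have hl : (natToBits n a).length < h := by rw [natToBits_length]; omega
    refine full_step H (fun _ _ => far.symm) (fun _ _ _ => far.mono)
      (fun X Y b hF hb hb' => hF.2.2.1 b hb hb') ?_ ?_ ?_ ?_ ?_ ?_ Fy Fz
    · intro X Y hF hy hz
      refine hF.2.2.2 _ hy _ hz (nd h m j (i0 + 1) (natToBits n a)) (nd_valid hj hjm hi hl) ?_ ?_
        (nd_child hl _) (nd_child hl _)
      · intro e
        have := nd_inj hh e
        simp at this
      · intro e
        have := nd_inj hh e
        simp at this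
    · rintro X Y hF ⟨c1, h1, c2, h2, h3⟩ ⟨b1, k1, b2, k2, k3⟩
      have q := hPH (i0 * NN h + (2 * ((2 * a + 1) * 2 ^ r) - 1)) (hbd _ (by omega)) X Y hF
      have ee : i0 * NN h + (2 * ((2 * a + 1) * 2 ^ r) - 1)
        = i0 * NN h + 2 * ((2 * a + 1) * 2 ^ r) - 1 := by omega
      have ee' : i0 * NN h + 2 * ((2 * a + 1) * 2 ^ r) - 1 + 1
        = i0 * NN h + 2 * ((2 * a + 1) * 2 ^ r) := by omega
      rw [ee, ee'] at q
      exact q ⟨c1, h1, c2, h2, h3⟩ ⟨b1, k1, b2, k2, k3⟩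
    · exact Or.inr (Or.inl ⟨_, by rw [hf]; exact hpre _ _ le_rfl (by omega),
        (natToBits_length _ _).le, rfl⟩)
    · exact Or.inr (Or.inl ⟨_, by rw [ht]; exact hpre _ _ (by omega) (by omega),
        (natToBits_length _ _).le, rfl⟩)
    · intro w hw
      exact Or.inl (Rng.mono hw (by omega) (by omega))
    · intro w hw
      exact Or.inl (Rng.mono hw (by omega) (by omega))

end Ghdm

namespace Ghdm

open GA

theorem DD_succ (h d : ℕ) {j : ℕ} (hj : 2 ≤ j) : DD h d j = NN h * DD h d (j - 1) := by
  rw [DD_mul h d (e := j - 1) (j := j) (by omega) (by omega), show j - (j - 1) = 1 by omega, pow_one]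

theorem Rng.down {h d j a b : ℕ} {w : Raw} (hj : 2 ≤ j) (H : Rng h d j a b w)
    (hl : lev w ≤ j - 1) : Rng h d (j - 1) (a * NN h) (b * NN h) w := by
  obtain ⟨_, h2, h3⟩ := H
  rw [DD_succ h d hj, ← mul_assoc] at h2 h3
  exact ⟨hl, h2, h3⟩

theorem PH_one (h d m t : ℕ) : PH h d m 1 t := by
  have key : ∀ X Y c1, far h d m X Y → Rng h d 1 t t c1 → c1 ∈ X → c1 = .path (t * DD h d 1) := by
    intro X Y c1 hF H hc
    have hv := (hF.1 _ hc).1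
    have h1 := H.1
    cases c1 with
    | path k =>
      have h2 := H.2.1
      have h3 := H.2.2
      simp only [lf, rt] at h2 h3
      rw [le_antisymm h3 h2]
    | tree j i p =>
      have := hv.1
      simp only [lev] at h1
      omega
    | spine j i k t e s =>
      have := hv.1
      simp only [lev] at h1
      omega
  rintro X Y hF ⟨c1, h1, c2, h2, h3⟩ ⟨b1, k1, b2, k2, k3⟩
  have e1 := key X Y c1 hF h1 h3.1
  have e2 := key Y X b1 hF.symm k1 k3.1
  exact hF.2.2.1 c1 h3.1 (by rw [e1, ← e2]; exact k3.1)

theorem i_eq {h d j i i0 : ℕ} (hi : 1 ≤ i) (h1 : i0 * DD h d j ≤ (i - 1) * DD h d j)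
    (h2 : i * DD h d j ≤ (i0 + 1) * DD h d j) : i = i0 + 1 := by
  have a := Nat.le_of_mul_le_mul_right h1 (DD_pos h d j)
  have b := Nat.le_of_mul_le_mul_right h2 (DD_pos h d j)
  omega

theorem le_rg {h d m j i0 : ℕ} (hh : 1 ≤ h) (hd : 2 ≤ d) (hj : 2 ≤ j) {u v : Raw}
    (H : LE h d m j i0 (i0 + 1) u v) : RG h d m j i0 [] 0 (2 ^ h) u v := by
  have key : ∀ u v, LE h d m j i0 (i0 + 1) u v → EC h d m u v →
      RG h d m j i0 [] 0 (2 ^ h) u v := by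
    intro u v H he
    have hNN := NN_eq h
    have h2h : 2 ^ (h + 1) = 2 * 2 ^ h := by rw [pow_succ]; ring
    by_cases hl : lev u ≤ j - 1
    · have hlv : lev v ≤ j - 1 := by
        rcases ec_bd hh he with ⟨k, rfl, rfl⟩ | ⟨j', i, hj', hi, h1, h2, -⟩
        · exact hl
        · omega
      left
      have e : i0 * NN h + 2 * 2 ^ h - 1 = (i0 + 1) * NN h := by rw [Nat.add_mul]; omega
      rw [e, mul_zero, Nat.add_zero]
      exact ⟨H.1, H.2.1.down hj hl, H.2.2.down hj hlv⟩
    · have hlu : lev u = j := by have := H.2.1.1; omega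
      right
      rcases he with ⟨k, rfl, rfl⟩ | ⟨j', i, p, c, hj', hi, hp, hlen, rfl, rfl⟩ |
          ⟨j', i, k, t, e, s, rfl, hv, he⟩
      · simp only [lev] at hlu
        omega
      · rw [nd_lev_eq hp] at hlu
        subst hlu
        left
        have h1 := H.2.1.2.1
        have h2 := H.2.1.2.2
        have n1 : p ≠ List.replicate h true := by rintro rfl; simp at hlen
        have n2 : p ≠ List.replicate h false := by rintro rfl; simp at hlen
        rw [nd_short hp hlen] at h1 h2
        simp only [lf, rt, n1, n2, if_false] at h1 h2
        obtain rfl := i_eq hi h1 h2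
        exact ⟨p, c, List.nil_prefix, hlen, rfl, rfl⟩
      · simp only [lev] at hlu
        subst hlu
        have h1 := H.2.1.2.1
        have h2 := H.2.1.2.2
        simp only [lf, rt] at h1 h2
        simp only [Valid] at hv
        obtain rfl := i_eq (by omega) h1 h2
        simp only [Nat.add_sub_cancel] at he
        right; right
        have V := V_facts (h := h) (d := d) (jv := j' - 1) (g := i0 * NN h + t) (e := e) hh m
          (by omega) (by omega)
        have VR : Rng h d (j' - 1) (i0 * NN h + t - 1) (i0 * NN h + t - 1)
            (VsetElem h d (j' - 1) (i0 * NN h + t) e) := ⟨V.1, V.2.1.ge, V.2.2.1.le⟩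
        rcases hv.2.2.2.2.2.2.1 with ht | ht
        · obtain ⟨κ, rfl⟩ : ∃ κ, k = κ + 2 := ⟨k - 2, by omega⟩
          obtain rfl : t = 2 * κ + 2 := by omega
          refine ⟨κ, by omega, by omega, Or.inr (Or.inr (Or.inl ⟨⟨e, s, rfl⟩, ?_⟩))⟩
          rcases he with ⟨s', rfl⟩ | rfl | rfl
          · exact Or.inl ⟨e, s', rfl⟩
          · exact Or.inr (Or.inl rfl)
          · exact Or.inr (Or.inr VR)
        · obtain ⟨κ, rfl⟩ : ∃ κ, k = κ + 1 := ⟨k - 1, by omega⟩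
          obtain rfl : t = 2 * κ + 3 := by omega
          refine ⟨κ, by omega, by omega, Or.inl ⟨⟨e, s, rfl⟩, ?_⟩⟩
          rcases he with ⟨s', rfl⟩ | rfl | rfl
          · exact Or.inl ⟨e, s', rfl⟩
          · exact Or.inr (Or.inl rfl)
          · exact Or.inr (Or.inr VR)
  rcases ec_of_adj hh hd H.1 with h1 | h1
  · exact key u v H h1
  · exact (key v u H.symm h1).symm

theorem end_left {h d m j i0 : ℕ} (hh : 1 ≤ h) (hj : 2 ≤ j) {w : Raw}
    (hv : Valid h d m w) (hr : w ≠ RootR m) (H : Rng h d j i0 i0 w) :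
    w = leaf h m j i0 0 ∨ Rng h d (j - 1) (i0 * NN h) (i0 * NN h) w := by
  by_cases hl : lev w ≤ j - 1
  · exact Or.inr (H.down hj hl)
  left
  have hlw : lev w = j := by have := H.1; omega
  have h1 := H.2.1
  have h2 := H.2.2
  have hne := rep_ne hh
  cases w with
  | path k => simp only [lev] at hlw; omega
  | tree j' i p =>
    simp only [lev] at hlw
    subst hlw
    simp only [Valid] at hv
    have hp : p ≠ [] := by
      intro e
      apply hr
      obtain ⟨rfl, rfl⟩ := hv.2.2.2.2.2.1 e
      rw [e]; rfl
    simp only [leaf, natToBits_zero, nd, canon, rep_ne_nil hh, if_false, true_and]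
    simp only [lf, rt] at h1 h2
    by_cases c1 : p = List.replicate h true
    · simp only [c1, if_true, hne, if_false] at h1 h2
      have a := Nat.le_of_mul_le_mul_right h1 (DD_pos h d j')
      have b := Nat.le_of_mul_le_mul_right h2 (DD_pos h d j')
      obtain rfl : i0 = i := by omega
      rw [if_pos (by omega), c1]; rfl
    · by_cases c2 : p = List.replicate h false
      · obtain rfl := hv.2.2.2.2.2.2 c2 hp
        simp only [c2, hne.symm, if_true, if_false] at h1 h2
        have a := Nat.le_of_mul_le_mul_right h1 (DD_pos h d j')
        obtain rfl : i0 = 0 := by omega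
        simp [c2]
      · simp only [c1, c2, if_false] at h1 h2
        have a := Nat.le_of_mul_le_mul_right h1 (DD_pos h d j')
        have b := Nat.le_of_mul_le_mul_right h2 (DD_pos h d j')
        omega
  | spine j' i k t e s =>
    simp only [lev] at hlw
    subst hlw
    simp only [Valid] at hv
    simp only [lf, rt] at h1 h2
    have a := Nat.le_of_mul_le_mul_right h1 (DD_pos h d j')
    have b := Nat.le_of_mul_le_mul_right h2 (DD_pos h d j')
    omega

theorem end_right {h d m j i0 : ℕ} (hh : 1 ≤ h) (hj : 2 ≤ j) {w : Raw}
    (hv : Valid h d m w) (hr : w ≠ RootR m) (H : Rng h d j (i0 + 1) (i0 + 1) w) :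
    w = leaf h m j i0 (2 ^ h - 1) ∨
      Rng h d (j - 1) ((i0 + 1) * NN h) ((i0 + 1) * NN h) w := by
  rcases end_left hh hj hv hr H with e | e
  · left
    rw [e]
    have h1 := rep_ne hh
    simp [leaf, natToBits_zero, natToBits_last, nd, canon, h1]
  · exact Or.inr e

theorem PH_step {h d m j i0 : ℕ} (hh : 1 ≤ h) (hd : 2 ≤ d) (hj : 2 ≤ j) (hjm : j ≤ m)
    (hi : i0 < NN h ^ (m - j)) (hPH : ∀ t, t < NN h ^ (m - (j - 1)) → PH h d m (j - 1) t) :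
    PH h d m j i0 := by
  have F := full_gadget hh hd hj hjm hi hPH h 0 0 (by omega) (by simp)
  have hNN := NN_eq h
  have e : i0 * NN h + 2 * 2 ^ h - 1 = (i0 + 1) * NN h := by rw [Nat.add_mul]; omega
  have e0 : natToBits 0 0 = [] := rfl
  simp only [e0, zero_mul, mul_zero, Nat.add_zero, Nat.zero_add, one_mul, e] at F
  have hx : nd h m j (i0 + 1) [] = RootR m := by simp [nd, canon, RootR]
  rw [hx] at F
  rintro X Y hF ⟨c1, h1, c2, h2, h3⟩ ⟨b1, k1, b2, k2, k3⟩
  have s1 := end_left hh hj (hF.1 _ h3.1).1 (hF.1 _ h3.1).2 h1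
  have s2 := end_right hh hj (hF.1 _ h3.right).1 (hF.1 _ h3.right).2 h2
  have t1 := end_left hh hj (hF.2.1 _ k3.1).1 (hF.2.1 _ k3.1).2 k1
  have t2 := end_right hh hj (hF.2.1 _ k3.right).1 (hF.2.1 _ k3.right).2 k2
  have W1 := h3.mono le_rfl (fun _ _ _ _ => le_rg hh hd hj)
  have W2 := k3.mono le_rfl (fun _ _ _ _ => le_rg hh hd hj)
  have s2' : c2 = leaf h m j i0 (2 ^ h - 1) ∨
      c2 ∈ {w | Rng h d (j - 1) ((i0 + 1) * NN h) ((i0 + 1) * NN h) w} ∨ c2 = RootR m := by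
    rcases s2 with q | q
    · exact Or.inl q
    · exact Or.inr (Or.inl q)
  have t2' : b2 = leaf h m j i0 (2 ^ h - 1) ∨
      b2 ∈ {w | Rng h d (j - 1) ((i0 + 1) * NN h) ((i0 + 1) * NN h) w} ∨ b2 = RootR m := by
    rcases t2 with q | q
    · exact Or.inl q
    · exact Or.inr (Or.inl q)
  rcases F.1.1 X Y c1 c2 b1 b2 hF s1 t1 s2' t2' W1 W2 with q | q
  · subst q
    exact (hF.1 _ (F.1.2 X Y c2 b1 b2 hF s2 t1 t2' W1 W2)).2 rfl
  · subst q
    exact (hF.2.1 _ (F.1.2 Y X b2 c1 c2 hF.symm t2 s1 s2' W2 W1)).2 rfl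

theorem PH_all {h d m : ℕ} (hh : 1 ≤ h) (hd : 2 ≤ d) (q : ℕ) :
    q + 1 ≤ m → ∀ t, t < NN h ^ (m - (q + 1)) → PH h d m (q + 1) t := by
  induction q with
  | zero => intro _ t _; exact PH_one h d m t
  | succ q ih =>
    intro hq t ht
    exact PH_step hh hd (by omega) hq ht (fun t ht => ih (by omega) t ht)

theorem rng_all {h d m : ℕ} {w : Raw} (hv : Valid h d m w) :
    Rng h d m 0 1 w ∨ (m = 0) := by
  by_cases hm : m = 0
  · exact Or.inr hm
  left
  have key : ∀ j i, 1 ≤ j → j ≤ m → i ≤ NN h ^ (m - j) → i * DD h d j ≤ 1 * DD h d m := by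
    intro j i h1 h2 h3
    rw [one_mul, DD_mul h d h1 h2]
    exact Nat.mul_le_mul_right _ h3
  refine ⟨?_, by simp, ?_⟩
  · cases w with
    | path k => simp only [lev]; omega
    | tree j i p => exact hv.2.1
    | spine j i k t e s => exact hv.2.1
  · cases w with
    | path k => simp only [rt, one_mul, DD]; rw [mul_comm]; exact hv
    | tree j i p =>
      simp only [Valid] at hv
      have := key j i (by omega) hv.2.1 hv.2.2.2.1
      simp only [rt]
      split_ifs
      · exact (Nat.mul_le_mul_right _ (by omega)).trans this
      · exact this
    | spine j i k t e s =>
      simp only [Valid] at hv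
      exact key j i (by omega) hv.2.1 hv.2.2.2.1

end Ghdm

namespace Ghdm

open GA

theorem walk_cn {h d m : ℕ} (hm : 2 ≤ m) {X : Set Raw} (hX : ∀ w ∈ X, w ≠ RootR m)
    {s t : Verts h d m} (P : (G h d m).Walk s t) :
    (∀ v ∈ P.support, v.1 ∈ X) → Cn (LE h d m m 0 1) X s.1 t.1 := by
  have hr : ∀ w : Verts h d m, Rng h d m 0 1 w.1 := by
    intro w
    rcases rng_all w.2 with q | q
    · exact q
    · omega
  induction P with
  | nil => intro H; exact Cn.refl (H _ (by simp))
  | @cons u v w huv P ih =>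
    intro H
    have h1 : u.1 ∈ X := H u (by simp)
    have h2 : v.1 ∈ X := H v (by simp)
    have c := ih (fun x hx => H x (by simp [hx]))
    refine Cn.trans (v := v.1) ((Cn.refl h1).tail ⟨⟨u.2, v.2, hX _ h1, hX _ h2, ?_⟩, hr u, hr v⟩ h2) c
    simp only [G, SimpleGraph.comap_adj, SimpleGraph.fromRel_adj] at huv
    exact huv.2

theorem S_rng {h d m : ℕ} (hh : 1 ≤ h) (hm : 2 ≤ m) {w : Raw} (H : w ∈ SsetR h d m) :
    Rng h d m 0 0 w := by
  rcases H with ⟨e, h1, h2, rfl⟩ | H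
  · have V := V_facts (h := h) (d := d) (jv := m - 1) (g := 1) (e := e) hh m h1 h2
    rw [V.2.2.2]
    refine ⟨by omega, by simp, ?_⟩
    rw [V.2.2.1]; simp
  · rw [Set.mem_singleton_iff] at H
    subst H
    have : leafPos h 1 = List.replicate h false := natToBits_zero h
    rw [this]
    simp only [canon, rep_ne_nil hh, if_false, lt_irrefl, and_false]
    refine ⟨le_rfl, by simp, by simp [rt]⟩

theorem T_rng {h d m : ℕ} (hh : 1 ≤ h) (hm : 2 ≤ m) {w : Raw} (H : w ∈ TsetR h d m) :
    Rng h d m 1 1 w := by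
  rcases H with ⟨e, h1, h2, rfl⟩ | H
  · have V := V_facts (h := h) (d := d) (jv := m - 1) (g := 2 ^ (h + 1)) (e := e) hh m h1 h2
    rw [V.2.2.2]
    have e1 : (2 ^ (h + 1) - 1) * DD h d (m - 1) = 1 * DD h d m := by
      rw [DD_succ h d hm, one_mul]; rfl
    exact ⟨by omega, by rw [V.2.1, e1], by rw [V.2.2.1, e1]⟩
  · rw [Set.mem_singleton_iff] at H
    subst H
    have : leafPos h (2 ^ h) = List.replicate h true := natToBits_last h
    rw [this]
    have h1 := rep_ne hh
    simp only [canon, rep_ne_nil hh, if_false, h1, false_and]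
    refine ⟨le_rfl, by simp [lf], by simp [rt, h1]⟩

theorem S_zero {d m : ℕ} {w : Raw} (H : w ∈ SsetR 0 d m) : w = .path 0 ∨ w = RootR m := by
  rcases H with ⟨e, h1, h2, rfl⟩ | H
  · by_cases he : e = 1
    · left; simp [VsetElem, he, canon]
    · right; simp [VsetElem, he, canon, RootR]
  · right
    rw [Set.mem_singleton_iff] at H
    rw [H]
    simp [leafPos, natToBits, canon, RootR]

theorem sDist_le_edist {V : Type*} {G : SimpleGraph V} {a b a' b' : V} (P : G.Walk a b)
    (Q : G.Walk a' b') {u v : V} (hu : u ∈ P.support) (hv : v ∈ Q.support) :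
    CGT.sDist G (CGT.walkSupp P) (CGT.walkSupp Q) ≤ G.edist u v :=
  (iInf_le _ (⟨u, hu⟩ : CGT.walkSupp P)).trans (iInf_le _ (⟨v, hv⟩ : CGT.walkSupp Q))

end Ghdm

/-- if `P, Q` are paths of `G_{h,d,m}` (with `d, m ≥ 2`) between `S(G)` and
`T(G)`, then one of them contains the root `R(G)`, or they come within distance 2. -/
theorem statement8 (h d m : ℕ) (hd : 2 ≤ d) (hm : 2 ≤ m)
    (s t s' t' : Ghdm.Verts h d m)
    (hs : s.1 ∈ Ghdm.SsetR h d m) (ht : t.1 ∈ Ghdm.TsetR h d m)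
    (hs' : s'.1 ∈ Ghdm.SsetR h d m) (ht' : t'.1 ∈ Ghdm.TsetR h d m)
    (P : (Ghdm.G h d m).Walk s t) (hP : P.IsPath)
    (Q : (Ghdm.G h d m).Walk s' t') (hQ : Q.IsPath) :
    (∃ v ∈ P.support, v.1 = Ghdm.RootR m) ∨ (∃ v ∈ Q.support, v.1 = Ghdm.RootR m) ∨
      CGT.sDist (Ghdm.G h d m) (CGT.walkSupp P) (CGT.walkSupp Q) ≤ 2 := by
  by_contra hcon
  push Not at hcon
  obtain ⟨r1, r2, hfar⟩ := hcon
  have hdis : ∀ u ∈ P.support, u ∉ Q.support := by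
    intro u h1 h2
    have := Ghdm.sDist_le_edist P Q h1 h2
    rw [SimpleGraph.edist_self] at this
    exact absurd (hfar.trans_le this) (by simp)
  rcases Nat.eq_zero_or_pos h with rfl | hh
  · have a := (Ghdm.S_zero hs).resolve_right (r1 _ P.start_mem_support)
    have b := (Ghdm.S_zero hs').resolve_right (r2 _ Q.start_mem_support)
    have e : s = s' := Subtype.ext (a.trans b.symm)
    exact hdis s P.start_mem_support (e ▸ Q.start_mem_support)
  have key : ∀ (a b : Ghdm.Verts h d m) (W : (Ghdm.G h d m).Walk a b),
      (∀ v ∈ W.support, v.1 ≠ Ghdm.RootR m) →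
      ∀ w ∈ {w : Ghdm.Raw | ∃ v ∈ W.support, v.1 = w}, Ghdm.Valid h d m w ∧ w ≠ Ghdm.RootR m := by
    rintro a b W hW w ⟨v, hv, rfl⟩
    exact ⟨v.2, hW v hv⟩
  have F : Ghdm.far h d m {w | ∃ v ∈ P.support, v.1 = w} {w | ∃ v ∈ Q.support, v.1 = w} := by
    refine ⟨key _ _ P r1, key _ _ Q r2, ?_, ?_⟩
    · rintro w ⟨v, hv, rfl⟩ ⟨v', hv', e⟩
      exact hdis v hv ((Subtype.ext e : v' = v) ▸ hv')
    · rintro u ⟨u, hu, rfl⟩ v ⟨v, hv, rfl⟩ w hw h1 h2 h3 h4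
      have a1 : (Ghdm.G h d m).Adj u ⟨w, hw⟩ := by
        simp only [Ghdm.G, SimpleGraph.comap_adj, SimpleGraph.fromRel_adj]
        exact ⟨h1.symm, Or.inr h3⟩
      have a2 : (Ghdm.G h d m).Adj ⟨w, hw⟩ v := by
        simp only [Ghdm.G, SimpleGraph.comap_adj, SimpleGraph.fromRel_adj]
        exact ⟨h2, Or.inl h4⟩
      have q := Ghdm.sDist_le_edist P Q hu hv
      have q2 := SimpleGraph.edist_le (SimpleGraph.Walk.cons a1 (SimpleGraph.Walk.cons a2 .nil))
      simp only [SimpleGraph.Walk.length_cons, SimpleGraph.Walk.length_nil] at q2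
      have q3 := hfar.trans_le (q.trans q2)
      norm_num at q3
  have PHm := Ghdm.PH_all (m := m) hh hd (m - 1) (by omega) 0 (by
    rw [show m - (m - 1 + 1) = 0 by omega]; simp)
  rw [show m - 1 + 1 = m by omega] at PHm
  exact PHm _ _ F
    ⟨s.1, Ghdm.S_rng hh hm hs, t.1, Ghdm.T_rng hh hm ht,
      Ghdm.walk_cn hm (fun w hw => (key _ _ P r1 w hw).2) P (fun v hv => ⟨v, hv, rfl⟩)⟩
    ⟨s'.1, Ghdm.S_rng hh hm hs', t'.1, Ghdm.T_rng hh hm ht',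
      Ghdm.walk_cn hm (fun w hw => (key _ _ Q r2 w hw).2) Q (fun v hv => ⟨v, hv, rfl⟩)⟩
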